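/- Rescaled representation of the homogenized energy density (Corollary 3.4 of the paper): assume Assumption H. For every F ∈ ℝ^{n×d} there exists a set Ω_F ∈ ℱ with ℙ(Ω_F) = 1 such that for every ω ∈ Ω_F and every closed axis-parallel box Q = Π_{i=1}^d [a_i,b_i] with a_i < b_i for all i, lim_{ε↓0} ε^d · m_F(ω; ε^{−1}Q) = |Q| · W₀(F). -/

import Mathlib

open MeasureTheory Filter Metric Set
open scoped Classical
open scoped ENNReal Topology Pointwise

noncomputable section

namespace StochHom

/-- `ℝ^d` with the Euclidean norm. -/
abbrev Rd (d : ℕ) : Type := EuclideanSpace ℝ (Fin d)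

/-- `ℝ^n` with the Euclidean norm. -/
abbrev Rn (n : ℕ) : Type := EuclideanSpace ℝ (Fin n)

/-- The lattice `ℤ^d`. -/
abbrev Zd (d : ℕ) : Type := Fin d → ℤ

variable {d n : ℕ}

/-- The embedding of the lattice `ℤ^d` into `ℝ^d`. -/
def toRd (z : Zd d) : Rd d := (EuclideanSpace.equiv (Fin d) ℝ).symm fun i => (z i : ℝ)

/-- The standard basis vectors `eᵢ` of `ℤ^d`. -/
def stdb (i : Fin d) : Zd d := fun j => if j = i then 1 else 0

/-- The interaction range `R = max {4√d, max_{b ∈ ℰ₀} |b|}`. -/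
def irange (d : ℕ) (E0 : Finset (Zd d)) : ℝ :=
  max (4 * Real.sqrt d) (sSup ((fun b : Zd d => ‖toRd b‖) '' (E0 : Set (Zd d))))

variable {Ω : Type*} [MeasurableSpace Ω]

/-- The energy `E₁(ω; u, ℤ^d ∩ A)`. -/
def energy1 (τ : Zd d → Ω → Ω) (E0 : Finset (Zd d)) (V : Zd d → Ω → Rn n → ℝ)
    (ω : Ω) (u : Zd d → Rn n) (A : Set (Rd d)) : ℝ :=
  ∑' z : Zd d, if toRd z ∈ A then
      ∑ b ∈ E0, V b (τ z ω) ((‖toRd b‖)⁻¹ • (u (z + b) - u z)) else 0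

/-- The scaled energy `E_ε(ω; u, A)`, where a function `u : εℤ^d → ℝ^n` is identified with a
function on `ℤ^d` via `z ↦ u(εz)`, so that `∂_b^ε u (z) = (u (z+b) - u z)/(ε |b|)`. -/
def energyE (τ : Zd d → Ω → Ω) (E0 : Finset (Zd d)) (V : Zd d → Ω → Rn n → ℝ)
    (ε : ℝ) (ω : Ω) (u : Zd d → Rn n) (A : Set (Rd d)) : ℝ :=
  ε ^ d * ∑' z : Zd d, if ε • toRd z ∈ A then
      ∑ b ∈ E0, V b (τ z ω) ((ε * ‖toRd b‖)⁻¹ • (u (z + b) - u z)) else 0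

/-- The localized minimal energy `m_F(ω; A)`. -/
def mF (τ : Zd d → Ω → Ω) (E0 : Finset (Zd d)) (V : Zd d → Ω → Rn n → ℝ)
    (ω : Ω) (F : Rd d →L[ℝ] Rn n) (A : Set (Rd d)) : ℝ :=
  ⨅ φ : {φ : Zd d → Rn n // ∀ z : Zd d, infDist (toRd z) Aᶜ ≤ irange d E0 → φ z = 0},
    energy1 τ E0 V ω (fun z => F (toRd z) + φ.1 z) A

/-- The half-open cube `[0,k)^d ⊂ ℝ^d`. -/
def cube (d k : ℕ) : Set (Rd d) := {x | ∀ i, 0 ≤ x i ∧ x i < (k : ℝ)}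

/-- The homogenized energy density `W₀(F) = inf_{k ≥ 1} k⁻ᵈ E[m_F(·, [0,k)^d)]`. -/
def W0 (P : Measure Ω) (τ : Zd d → Ω → Ω) (E0 : Finset (Zd d))
    (V : Zd d → Ω → Rn n → ℝ) (F : Rd d →L[ℝ] Rn n) : ℝ :=
  ⨅ k : {k : ℕ // 0 < k}, (((k : ℕ) : ℝ) ^ d)⁻¹ * ∫ ω, mF τ E0 V ω F (cube d k) ∂P

/-- Half-open axis-parallel box `Π_i [aᵢ, bᵢ)`. -/
def halfBox (a b : Fin d → ℝ) : Set (Rd d) := {x | ∀ i, a i ≤ x i ∧ x i < b i}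

/-- Open axis-parallel box `Π_i (aᵢ, bᵢ)`. -/
def openBox (a b : Fin d → ℝ) : Set (Rd d) := {x | ∀ i, a i < x i ∧ x i < b i}

/-- Closed axis-parallel box `Π_i [aᵢ, bᵢ]`. -/
def closedBox (a b : Fin d → ℝ) : Set (Rd d) := {x | ∀ i, a i ≤ x i ∧ x i ≤ b i}

/-- Half-open axis-parallel box with integer corners. -/
def intBox (a b : Zd d) : Set (Rd d) := {x | ∀ i, (a i : ℝ) ≤ x i ∧ x i < (b i : ℝ)}

/-- The periodic cell minimization `W^{(k)}(ω; F)`. -/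
def Wper (τ : Zd d → Ω → Ω) (E0 : Finset (Zd d)) (V : Zd d → Ω → Rn n → ℝ)
    (k : ℕ) (ω : Ω) (F : Rd d →L[ℝ] Rn n) : ℝ :=
  ⨅ φ : {φ : Zd d → Rn n // ∀ z z' : Zd d, φ (z + k • z') = φ z},
    ((k : ℝ) ^ d)⁻¹ * energy1 τ E0 V ω (fun z => F (toRd z) + φ.1 z) (cube d k)


/-! ### Lattice boxes -/

/-- Constant lattice vector. -/
def cst (d : ℕ) (c : ℤ) : Zd d := fun _ => c

@[simp] lemma cst_apply (c : ℤ) (i : Fin d) : cst d c i = c := rfl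

/-- Centered lattice cube. -/
def CN (d N : ℕ) : Finset (Zd d) := Finset.Icc (cst d (-(N : ℤ))) (cst d N)

/-- Translate of a finite lattice set. -/
def shift (w : Zd d) (S : Finset (Zd d)) : Finset (Zd d) := S.map (addRightEmbedding w)

lemma mem_shift {w z : Zd d} {S : Finset (Zd d)} : z ∈ shift w S ↔ z - w ∈ S := by
  simp only [shift, Finset.mem_map, addRightEmbedding_apply]
  constructor
  · rintro ⟨x, hx, rfl⟩; simpa using hx
  · intro h; exact ⟨z - w, h, by simp⟩

lemma sum_shift (w : Zd d) (S : Finset (Zd d)) (h : Zd d → ℝ) :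
    ∑ z ∈ shift w S, h z = ∑ z ∈ S, h (z + w) := by
  simp [shift, Finset.sum_map]

lemma mem_Icc_iff {a b z : Zd d} : z ∈ Finset.Icc a b ↔ ∀ i, a i ≤ z i ∧ z i ≤ b i := by
  rw [Finset.mem_Icc, Pi.le_def, Pi.le_def]
  exact ⟨fun h i => ⟨h.1 i, h.2 i⟩, fun h => ⟨fun i => (h i).1, fun i => (h i).2⟩⟩

lemma mem_CN {N : ℕ} {z : Zd d} : z ∈ CN d N ↔ ∀ i, -(N : ℤ) ≤ z i ∧ z i ≤ N := by
  simp only [CN, mem_Icc_iff, cst_apply]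

lemma shift_Icc (w a b : Zd d) : shift w (Finset.Icc a b) = Finset.Icc (a + w) (b + w) := by
  ext z
  simp only [mem_shift, mem_Icc_iff, Pi.sub_apply, Pi.add_apply]
  exact forall_congr' fun i => by constructor <;> rintro ⟨h1, h2⟩ <;> constructor <;> linarith

lemma shift_card (w : Zd d) (S : Finset (Zd d)) : (shift w S).card = S.card := by
  simp [shift]

lemma card_CN (N : ℕ) : (CN d N).card = (2 * N + 1) ^ d := by
  have h : ((N : ℤ) + 1 + N).toNat = 2 * N + 1 := by omega
  simp [CN, Pi.card_Icc, h]

lemma CN_mono {N K : ℕ} (h : N ≤ K) : CN d N ⊆ CN d K := by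
  intro z hz
  rw [mem_CN] at *
  intro i
  have := hz i
  omega

lemma card_CN_pos (N : ℕ) : (0 : ℝ) < (CN d N).card := by
  rw [card_CN]; positivity

/-- Families of lattice boxes asymptotic to the dilates of a box. -/
def BoxFam (a b : Fin d → ℝ) (A B : ℝ → Zd d) : Prop :=
  (∀ i, Tendsto (fun t : ℝ => (A t i : ℝ) / t) atTop (𝓝 (a i))) ∧
  (∀ i, Tendsto (fun t : ℝ => (B t i : ℝ) / t) atTop (𝓝 (b i)))

lemma BoxFam.add {a b : Fin d → ℝ} {A B : ℝ → Zd d} (h : BoxFam a b A B) (v w : Zd d) :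
    BoxFam a b (fun t => A t + v) (fun t => B t + w) := by
  have key : ∀ (c : ℤ), Tendsto (fun t : ℝ => (c : ℝ) / t) atTop (𝓝 0) := fun c =>
    tendsto_const_nhds.div_atTop tendsto_id
  constructor
  · intro i
    have := (h.1 i).add (key (v i))
    simpa [add_div] using this
  · intro i
    have := (h.2 i).add (key (w i))
    simpa [add_div] using this

lemma BoxFam.card {a b : Fin d → ℝ} (hab : ∀ i, a i < b i) {A B : ℝ → Zd d}
    (h : BoxFam a b A B) :
    Tendsto (fun t : ℝ => ((Finset.Icc (A t) (B t)).card : ℝ) / t ^ d) atTop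
      (𝓝 (∏ i, (b i - a i))) := by
  have h1 : ∀ i, Tendsto (fun t : ℝ => ((B t i + 1 - A t i : ℤ) : ℝ) / t) atTop
      (𝓝 (b i - a i)) := by
    intro i
    have := ((h.add 0 (cst d 1)).2 i).sub (h.1 i)
    refine this.congr fun t => ?_
    simp [sub_div]
  have h2 : Tendsto (fun t : ℝ => ∏ i, ((B t i + 1 - A t i : ℤ) : ℝ) / t) atTop
      (𝓝 (∏ i, (b i - a i))) := tendsto_finsetProd _ fun i _ => h1 i
  refine h2.congr' ?_
  have h3 : ∀ᶠ t in atTop, ∀ i, 0 < ((B t i + 1 - A t i : ℤ) : ℝ) / t :=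
    eventually_all.2 fun i => (h1 i).eventually (lt_mem_nhds (sub_pos.2 (hab i)))
  filter_upwards [h3, eventually_gt_atTop (0 : ℝ)] with t ht ht0
  rw [Pi.card_Icc, Finset.prod_div_distrib]
  simp only [Finset.prod_const, Finset.card_univ, Fintype.card_fin]
  congr 1
  push_cast
  refine Finset.prod_congr rfl fun i _ => ?_
  have h4 : (0 : ℝ) < ((B t i + 1 - A t i : ℤ) : ℝ) := by
    have := mul_pos (ht i) ht0
    rwa [div_mul_cancel₀ _ ht0.ne'] at this
  have h5 : 0 < B t i + 1 - A t i := by exact_mod_cast h4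
  have h6 : ((B t i + 1 - A t i).toNat : ℤ) = B t i + 1 - A t i := Int.toNat_of_nonneg h5.le
  rw [Int.card_Icc]
  have : (((B t i + 1 - A t i).toNat : ℤ) : ℝ) = ((B t i + 1 - A t i : ℤ) : ℝ) := by rw [h6]
  rw [Int.cast_natCast] at this
  rw [this]; push_cast; ring

/-- Size constant of a box. -/
def bsize (a b : Fin d → ℝ) : ℝ := ∑ i, (|a i| + |b i|) + 1

lemma bsize_pos (a b : Fin d → ℝ) : 0 < bsize a b := by
  unfold bsize; positivity

lemma BoxFam.subset {a b : Fin d → ℝ} {A B : ℝ → Zd d} (h : BoxFam a b A B) :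
    ∀ᶠ t : ℝ in atTop, Finset.Icc (A t) (B t) ⊆ CN d ⌈bsize a b * t⌉₊ := by
  have ha : ∀ i, |a i| < bsize a b ∧ |b i| < bsize a b := by
    intro i
    have : |a i| + |b i| ≤ ∑ i, (|a i| + |b i|) :=
      Finset.single_le_sum (f := fun i => |a i| + |b i|) (fun i _ => by positivity)
        (Finset.mem_univ i)
    unfold bsize
    constructor <;> linarith [abs_nonneg (a i), abs_nonneg (b i)]
  have h1 : ∀ᶠ t : ℝ in atTop, ∀ i, -bsize a b < (A t i : ℝ) / t :=
    eventually_all.2 fun i => (h.1 i).eventually (lt_mem_nhds (neg_lt_of_abs_lt (ha i).1))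
  have h2 : ∀ᶠ t : ℝ in atTop, ∀ i, (B t i : ℝ) / t < bsize a b :=
    eventually_all.2 fun i => (h.2 i).eventually (gt_mem_nhds (lt_of_abs_lt (ha i).2))
  filter_upwards [h1, h2, eventually_gt_atTop (0 : ℝ)] with t h1 h2 ht
  intro z hz
  rw [mem_Icc_iff] at hz
  rw [mem_CN]
  intro i
  have e1 := h1 i
  have e2 := h2 i
  rw [lt_div_iff₀ ht] at e1
  rw [div_lt_iff₀ ht] at e2
  have e3 := Nat.le_ceil (bsize a b * t)
  have z1 : (A t i : ℝ) ≤ z i := by exact_mod_cast (hz i).1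
  have z2 : (z i : ℝ) ≤ B t i := by exact_mod_cast (hz i).2
  constructor
  · have : (-(⌈bsize a b * t⌉₊ : ℝ)) ≤ z i := by linarith
    exact_mod_cast this
  · have : (z i : ℝ) ≤ (⌈bsize a b * t⌉₊ : ℝ) := by linarith
    exact_mod_cast this

lemma CN_card_bound (c : ℝ) (hc : 0 < c) {t : ℝ} (ht : 3 ≤ t) :
    ((CN d ⌈c * t⌉₊).card : ℝ) ≤ (2 * c + 1) ^ d * t ^ d := by
  rw [card_CN, ← mul_pow]
  push_cast
  have := Nat.ceil_lt_add_one (a := c * t) (by positivity)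
  refine pow_le_pow_left₀ (by positivity) ?_ d
  nlinarith

lemma CN_ratio (d K : ℕ) :
    Tendsto (fun N : ℕ => ((CN d (N + K)).card : ℝ) / (CN d N).card) atTop (𝓝 1) := by
  have h : Tendsto (fun N : ℕ => (1 + (2 * K : ℝ) / (2 * N + 1)) ^ d) atTop (𝓝 ((1 + 0) ^ d)) := by
    refine Tendsto.pow (tendsto_const_nhds.add ?_) d
    refine tendsto_const_nhds.div_atTop ?_
    refine tendsto_atTop_add_const_right _ _ ?_
    exact tendsto_natCast_atTop_atTop.const_mul_atTop (by norm_num)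
  simp only [add_zero, one_pow] at h
  refine h.congr fun N => ?_
  rw [card_CN, card_CN]
  push_cast
  rw [← div_pow]
  congr 1
  field_simp
  ring

/-! ### Maximal inequality -/

lemma mem_shift_CN {r : ℕ} {x z : Zd d} :
    x ∈ shift z (CN d r) ↔ x ∈ closedBall z (r : ℝ) := by
  rw [mem_shift, mem_CN, mem_closedBall, dist_pi_le_iff (by positivity)]
  refine forall_congr' fun i => ?_
  rw [Int.dist_eq, abs_le, Pi.sub_apply]
  constructor
  · rintro ⟨h1, h2⟩
    constructor
    · exact_mod_cast h1
    · exact_mod_cast h2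
  · rintro ⟨h1, h2⟩
    constructor
    · exact_mod_cast h1
    · exact_mod_cast h2

/-- Nonnegative superadditive set functions. -/
structure SupFun (g : Finset (Zd d) → ℝ) : Prop where
  nonneg : ∀ S, 0 ≤ g S
  superadd : ∀ S T, Disjoint S T → g S + g T ≤ g (S ∪ T)

lemma SupFun.mono {g : Finset (Zd d) → ℝ} (hg : SupFun g) {S T : Finset (Zd d)} (h : S ⊆ T) :
    g S ≤ g T := by
  have h1 := hg.superadd S (T \ S) Finset.disjoint_sdiff
  rw [Finset.union_sdiff_of_subset h] at h1
  linarith [hg.nonneg (T \ S)]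

lemma SupFun.sum_le {g : Finset (Zd d) → ℝ} (hg : SupFun g) {ι : Type*} (u : Finset ι)
    (f : ι → Finset (Zd d)) (hf : (u : Set ι).PairwiseDisjoint f) :
    ∑ i ∈ u, g (f i) ≤ g (u.biUnion f) := by
  induction u using Finset.induction_on with
  | empty => simpa using hg.nonneg ∅
  | insert a s ha ih =>
    rw [Finset.sum_insert ha, Finset.biUnion_insert]
    have h1 : (s : Set ι).PairwiseDisjoint f := hf.subset (by simp)
    have h2 : Disjoint (f a) (s.biUnion f) := by
      rw [Finset.disjoint_biUnion_right]
      intro b hb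
      exact hf (by simp) (by simp [hb]) (by rintro rfl; exact ha hb)
    linarith [ih h1, hg.superadd _ _ h2]

lemma vitali_count {g : Finset (Zd d) → ℝ} (hg : SupFun g) {lam : ℝ} (hlam : 0 < lam)
    {N K : ℕ} (T : Finset (Zd d)) (hT : T ⊆ CN d N) (r : Zd d → ℕ) (hr : ∀ z ∈ T, r z ≤ K)
    (hgr : ∀ z ∈ T, lam * (CN d (r z)).card ≤ g (shift z (CN d (r z)))) :
    lam * T.card ≤ 5 ^ d * g (CN d (N + K)) := by
  obtain ⟨u, hut, hdisj, hcov⟩ := Vitali.exists_disjoint_subfamily_covering_enlargement_closedBall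
    (T : Set (Zd d)) id (fun z => (r z : ℝ)) K (fun a ha => by exact_mod_cast hr a ha) 5 (by norm_num)
  have hufin : u.Finite := T.finite_toSet.subset hut
  lift u to Finset (Zd d) using hufin
  have hut' : u ⊆ T := by exact_mod_cast hut
  have hcov' : T ⊆ u.biUnion fun z => shift z (CN d (5 * r z)) := by
    intro z hz
    obtain ⟨b, hb, hsub⟩ := hcov z hz
    rw [Finset.mem_biUnion]
    refine ⟨b, hb, ?_⟩
    rw [mem_shift_CN]
    push_cast
    exact hsub (mem_closedBall_self (by positivity))
  have hc1 : (T.card : ℝ) ≤ ∑ z ∈ u, 5 ^ d * ((CN d (r z)).card : ℝ) := by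
    calc (T.card : ℝ) ≤ ((u.biUnion fun z => shift z (CN d (5 * r z))).card : ℝ) := by
          exact_mod_cast Finset.card_le_card hcov'
      _ ≤ ((∑ z ∈ u, (shift z (CN d (5 * r z))).card : ℕ) : ℝ) := by
          exact_mod_cast Finset.card_biUnion_le
      _ ≤ _ := by
          push_cast
          refine Finset.sum_le_sum fun z _ => ?_
          rw [shift_card, card_CN, card_CN]
          push_cast
          rw [← mul_pow]
          exact pow_le_pow_left₀ (by positivity) (by linarith) d
  have hdis : (u : Set (Zd d)).PairwiseDisjoint fun z => shift z (CN d (r z)) := by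
    intro x hx y hy hxy
    have := hdisj hx hy hxy
    rw [Function.onFun, Finset.disjoint_left]
    intro w h1 h2
    rw [mem_shift_CN] at h1 h2
    exact Set.disjoint_left.1 this h1 h2
  have hsub : (u.biUnion fun z => shift z (CN d (r z))) ⊆ CN d (N + K) := by
    intro w hw
    rw [Finset.mem_biUnion] at hw
    obtain ⟨z, hz, hw⟩ := hw
    have h1 := hT (hut' hz)
    have h2 := hr z (hut' hz)
    rw [mem_CN] at h1 ⊢
    rw [mem_shift, mem_CN] at hw
    intro i
    have h3 := h1 i
    have h4 := hw i
    rw [Pi.sub_apply] at h4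
    push_cast
    omega
  calc lam * T.card ≤ lam * ∑ z ∈ u, 5 ^ d * ((CN d (r z)).card : ℝ) := by gcongr
    _ = 5 ^ d * ∑ z ∈ u, lam * ((CN d (r z)).card : ℝ) := by
        rw [Finset.mul_sum, Finset.mul_sum]
        exact Finset.sum_congr rfl fun z _ => by ring
    _ ≤ 5 ^ d * ∑ z ∈ u, g (shift z (CN d (r z))) := by
        gcongr with z hz
        exact hgr z (hut' hz)
    _ ≤ 5 ^ d * g (CN d (N + K)) := by
        gcongr
        exact (hg.sum_le u _ hdis).trans (hg.mono hsub)

/-- Measure-preserving lattice actions. -/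
structure IsAct (P : Measure Ω) (τ : Zd d → Ω → Ω) : Prop where
  zero : τ 0 = id
  add : ∀ x y : Zd d, τ (x + y) = τ x ∘ τ y
  mp : ∀ z : Zd d, MeasurePreserving (τ z) P P

/-- Stationary superadditive processes. -/
structure SupProc (P : Measure Ω) (τ : Zd d → Ω → Ω) (G : Ω → Finset (Zd d) → ℝ) : Prop where
  sup : ∀ ω, SupFun (G ω)
  stat : ∀ w ω S, G (τ w ω) S = G ω (shift w S)
  meas : ∀ S, Measurable fun ω => G ω S
  integ : ∀ S, Integrable (fun ω => G ω S) P

lemma max_ineq_fin {P : Measure Ω} [IsProbabilityMeasure P] {τ : Zd d → Ω → Ω} (hτ : IsAct P τ)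
    {G : Ω → Finset (Zd d) → ℝ} (hG : SupProc P τ G) {lam : ℝ} (hlam : 0 < lam) (N K : ℕ) :
    lam * (CN d N).card * P.real {ω | ∃ k ≤ K, lam * (CN d k).card ≤ G ω (CN d k)}
      ≤ 5 ^ d * ∫ ω, G ω (CN d (N + K)) ∂P := by
  set B := {ω | ∃ k ≤ K, lam * (CN d k).card ≤ G ω (CN d k)} with hB
  have hBm : MeasurableSet B := by
    have : B = ⋃ k ∈ Finset.range (K + 1), {ω | lam * (CN d k).card ≤ G ω (CN d k)} := by
      ext ω; simp [hB]
    rw [this]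
    exact Finset.measurableSet_biUnion _ fun k _ => measurableSet_le measurable_const (hG.meas _)
  have hpt : ∀ ω, lam * ∑ z ∈ CN d N, (τ z ⁻¹' B).indicator (fun _ => (1 : ℝ)) ω
      ≤ 5 ^ d * G ω (CN d (N + K)) := by
    intro ω
    have h1 : ∀ z, ∃ k, τ z ω ∈ B → k ≤ K ∧ lam * (CN d k).card ≤ G (τ z ω) (CN d k) := by
      intro z
      by_cases h : τ z ω ∈ B
      · obtain ⟨k, hk⟩ := h
        exact ⟨k, fun _ => hk⟩
      · exact ⟨0, fun h' => absurd h' h⟩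
    choose r hr using h1
    have := vitali_count (hG.sup ω) hlam (N := N) (K := K) ((CN d N).filter fun z => τ z ω ∈ B)
      (Finset.filter_subset _ _) r (fun z hz => (hr z (Finset.mem_filter.1 hz).2).1)
      (fun z hz => by
        rw [← hG.stat]
        exact (hr z (Finset.mem_filter.1 hz).2).2)
    refine le_trans (le_of_eq ?_) this
    congr 1
    simp only [Set.indicator_apply, Set.mem_preimage]
    rw [Finset.sum_ite]
    simp
  have hint : ∀ z, Integrable ((τ z ⁻¹' B).indicator (fun _ => (1 : ℝ))) P := fun z =>
    (integrable_const 1).indicator ((hτ.mp z).measurable hBm)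
  have h2 := integral_mono (μ := P) (((integrable_finsetSum _ fun z _ => hint z).const_mul lam))
    ((hG.integ (CN d (N + K))).const_mul (5 ^ d)) hpt
  rw [integral_const_mul, integral_const_mul, integral_finsetSum _ fun z _ => hint z] at h2
  have h3 : ∀ z, ∫ ω, (τ z ⁻¹' B).indicator (fun _ => (1 : ℝ)) ω ∂P = P.real B := by
    intro z
    rw [integral_indicator_const _ ((hτ.mp z).measurable hBm), smul_eq_mul, mul_one,
      (hτ.mp z).measureReal_preimage hBm.nullMeasurableSet]
  simp only [h3, Finset.sum_const, nsmul_eq_mul] at h2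
  rwa [mul_assoc]

lemma max_ineq {P : Measure Ω} [IsProbabilityMeasure P] {τ : Zd d → Ω → Ω} (hτ : IsAct P τ)
    {G : Ω → Finset (Zd d) → ℝ} (hG : SupProc P τ G) {lam δ : ℝ} (hlam : 0 < lam)
    (hδ : ∀ᶠ N in atTop, ∫ ω, G ω (CN d N) ∂P ≤ δ * (CN d N).card) :
    P.real {ω | ∃ k : ℕ, lam * (CN d k).card ≤ G ω (CN d k)} ≤ 5 ^ d * δ / lam := by
  have h1 : ∀ K : ℕ, P.real {ω | ∃ k ≤ K, lam * (CN d k).card ≤ G ω (CN d k)}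
      ≤ 5 ^ d * δ / lam := by
    intro K
    have h2 : Tendsto (fun N : ℕ => 5 ^ d * δ / lam *
        (((CN d (N + K)).card : ℝ) / (CN d N).card)) atTop (𝓝 (5 ^ d * δ / lam * 1)) :=
      (CN_ratio d K).const_mul _
    rw [mul_one] at h2
    refine ge_of_tendsto h2 ?_
    have h3 := (tendsto_add_atTop_nat K).eventually hδ
    filter_upwards [h3] with N hN
    have h4 := max_ineq_fin hτ hG hlam N K
    have h5 := card_CN_pos (d := d) N
    have h6 : lam * (CN d N).card * P.real {ω | ∃ k ≤ K, lam * (CN d k).card ≤ G ω (CN d k)}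
      ≤ 5 ^ d * (δ * (CN d (N + K)).card) := h4.trans (by gcongr)
    rw [div_mul_div_comm, le_div_iff₀ (by positivity)]
    linarith
  have h2 : Tendsto (fun K : ℕ => P.real {ω | ∃ k ≤ K, lam * (CN d k).card ≤ G ω (CN d k)}) atTop
      (𝓝 (P.real (⋃ K : ℕ, {ω | ∃ k ≤ K, lam * (CN d k).card ≤ G ω (CN d k)}))) := by
    refine (ENNReal.tendsto_toReal (measure_ne_top _ _)).comp ?_
    refine tendsto_measure_iUnion_atTop ?_
    intro K L hKL ω ⟨k, hk, h⟩
    exact ⟨k, hk.trans hKL, h⟩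
  have h3 : (⋃ K : ℕ, {ω | ∃ k ≤ K, lam * (CN d k).card ≤ G ω (CN d k)})
      = {ω | ∃ k : ℕ, lam * (CN d k).card ≤ G ω (CN d k)} := by
    ext ω
    simp only [Set.mem_iUnion, Set.mem_ofPred_eq]
    exact ⟨fun ⟨K, k, _, h⟩ => ⟨k, h⟩, fun ⟨k, h⟩ => ⟨k, k, le_rfl, h⟩⟩
  rw [h3] at h2
  exact le_of_tendsto h2 (Eventually.of_forall h1)

/-- Additive processes of nonnegative functions. -/
lemma supProc_sum {P : Measure Ω} {τ : Zd d → Ω → Ω} (hτ : IsAct P τ)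
    {h : Ω → ℝ} (hm : Measurable h) (h0 : ∀ ω, 0 ≤ h ω) (hi : Integrable h P) :
    SupProc P τ (fun ω S => ∑ z ∈ S, h (τ z ω)) where
  sup ω := ⟨fun S => Finset.sum_nonneg fun z _ => h0 _,
    fun S T hST => by rw [Finset.sum_union hST]⟩
  stat w ω S := by
    rw [sum_shift]
    refine Finset.sum_congr rfl fun z _ => ?_
    rw [hτ.add]; rfl
  meas S := Finset.measurable_fun_sum _ fun z _ => hm.comp (hτ.mp z).measurable
  integ S := integrable_finsetSum _ fun z _ => (hτ.mp z).integrable_comp_of_integrable hi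

lemma integral_act {P : Measure Ω} {τ : Zd d → Ω → Ω} (hτ : IsAct P τ)
    {h : Ω → ℝ} (hi : AEStronglyMeasurable h P) (z : Zd d) :
    ∫ ω, h (τ z ω) ∂P = ∫ ω, h ω ∂P := by
  have h1 := (hτ.mp z).map_eq
  have h2 : AEStronglyMeasurable h (Measure.map (τ z) P) := by rw [h1]; exact hi
  have := integral_map (hτ.mp z).measurable.aemeasurable h2
  rw [h1] at this
  exact this.symm

lemma integral_sum_act {P : Measure Ω} {τ : Zd d → Ω → Ω} (hτ : IsAct P τ)
    {h : Ω → ℝ} (hi : Integrable h P) (S : Finset (Zd d)) :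
    ∫ ω, ∑ z ∈ S, h (τ z ω) ∂P = (∫ ω, h ω ∂P) * S.card := by
  rw [integral_finsetSum (f := fun z ω => h (τ z ω)) _
    fun z _ => (hτ.mp z).integrable_comp_of_integrable hi]
  simp only [integral_act hτ hi.1, Finset.sum_const, nsmul_eq_mul]
  ring

/-! ### The pointwise ergodic theorem -/

lemma BoxFam.inter {a b : Fin d → ℝ} {A B A' B' : ℝ → Zd d} (h : BoxFam a b A B)
    (h' : BoxFam a b A' B') :
    BoxFam a b (fun t i => max (A t i) (A' t i)) (fun t i => min (B t i) (B' t i)) := by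
  constructor
  · intro i
    have := (h.1 i).max (h'.1 i)
    rw [max_self] at this
    refine this.congr' ?_
    filter_upwards [eventually_gt_atTop (0 : ℝ)] with t ht
    push_cast
    rw [max_div_div_right ht.le]
  · intro i
    have := (h.2 i).min (h'.2 i)
    rw [min_self] at this
    refine this.congr' ?_
    filter_upwards [eventually_gt_atTop (0 : ℝ)] with t ht
    push_cast
    rw [min_div_div_right ht.le]

lemma Icc_inter_eq (a b a' b' : Zd d) : Finset.Icc a b ∩ Finset.Icc a' b' =
    Finset.Icc (fun i => max (a i) (a' i)) (fun i => min (b i) (b' i)) := by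
  ext z
  simp only [Finset.mem_inter, mem_Icc_iff, max_le_iff, le_min_iff]
  exact ⟨fun h i => ⟨⟨(h.1 i).1, (h.2 i).1⟩, (h.1 i).2, (h.2 i).2⟩,
    fun h => ⟨fun i => ⟨(h i).1.1, (h i).2.1⟩, fun i => ⟨(h i).1.2, (h i).2.2⟩⟩⟩

/-- Convergence of averages along all box families, at a point. -/
def ConvAt (s : Zd d → ℝ) (m : ℝ) : Prop :=
  ∀ a b : Fin d → ℝ, (∀ i, a i < b i) → ∀ A B : ℝ → Zd d, BoxFam a b A B →
    Tendsto (fun t : ℝ => (∑ z ∈ Finset.Icc (A t) (B t), s z) / t ^ d) atTop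
      (𝓝 ((∏ i, (b i - a i)) * m))

lemma ConvAt.sdiff {s : Zd d → ℝ} {m : ℝ} (hs : ConvAt s m) {a b : Fin d → ℝ}
    (hab : ∀ i, a i < b i) {A B A' B' : ℝ → Zd d} (h : BoxFam a b A B)
    (h' : BoxFam a b A' B') :
    Tendsto (fun t : ℝ => (∑ z ∈ Finset.Icc (A t) (B t) \ Finset.Icc (A' t) (B' t), s z) / t ^ d)
      atTop (𝓝 0) := by
  have := (hs a b hab A B h).sub (hs a b hab _ _ (h.inter h'))
  rw [sub_self] at this
  refine this.congr fun t => ?_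
  rw [← sub_div, ← Icc_inter_eq, ← Finset.sum_sdiff_eq_sub Finset.inter_subset_left,
    Finset.sdiff_inter_self_left]

lemma convAt_const (c : ℝ) : ConvAt (d := d) (fun _ => c) c := by
  intro a b hab A B h
  refine ((h.card hab).mul_const c).congr fun t => ?_
  simp only [Finset.sum_const, nsmul_eq_mul]
  ring

lemma ConvAt.add {s s' : Zd d → ℝ} {m m' : ℝ} (h : ConvAt s m) (h' : ConvAt s' m') :
    ConvAt (fun z => s z + s' z) (m + m') := by
  intro a b hab A B hAB
  have := (h a b hab A B hAB).add (h' a b hab A B hAB)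
  rw [← mul_add] at this
  refine this.congr fun t => ?_
  rw [Finset.sum_add_distrib, add_div]

lemma ConvAt.const_mul {s : Zd d → ℝ} {m : ℝ} (c : ℝ) (h : ConvAt s m) :
    ConvAt (fun z => c * s z) (c * m) := by
  intro a b hab A B hAB
  have := (h a b hab A B hAB).const_mul c
  rw [mul_left_comm] at this
  refine this.congr fun t => ?_
  rw [← Finset.mul_sum, mul_div_assoc]

/-- A.e. convergence of ergodic averages along all box families. -/
def GoodConv (P : Measure Ω) (τ : Zd d → Ω → Ω) (h : Ω → ℝ) : Prop :=
  ∀ᵐ ω ∂P, ConvAt (fun z => h (τ z ω)) (∫ ω, h ω ∂P)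

lemma GoodConv.congr {P : Measure Ω} {τ : Zd d → Ω → Ω} (hτ : IsAct P τ) {h h' : Ω → ℝ}
    (hh : h =ᵐ[P] h') (hg : GoodConv P τ h) : GoodConv P τ h' := by
  have h1 : ∀ᵐ ω ∂P, ∀ z : Zd d, h (τ z ω) = h' (τ z ω) :=
    ae_all_iff.2 fun z => (hτ.mp z).quasiMeasurePreserving.ae hh
  filter_upwards [hg, h1] with ω hω h1
  rw [← integral_congr_ae hh]
  simpa only [h1] using hω

lemma ae_select {P : Measure Ω} [IsProbabilityMeasure P] (Q : ℝ → Ω → Prop)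
    (hmono : ∀ ε ε' ω, ε ≤ ε' → Q ε ω → Q ε' ω)
    (h : ∀ ε > 0, ∀ η > 0, ∃ E : Set Ω, P.real E ≤ η ∧ ∀ᵐ ω ∂P, ω ∉ E → Q ε ω) :
    ∀ᵐ ω ∂P, ∀ ε > 0, Q ε ω := by
  have h1 : ∀ n : ℕ, ∀ᵐ ω ∂P, Q (1 / ((n : ℝ) + 1)) ω := by
    intro n
    rw [ae_iff]
    have h2 : ∀ η > 0, P.real {ω | ¬ Q (1 / ((n : ℝ) + 1)) ω} ≤ η := by
      intro η hη
      obtain ⟨E, hE, hQ⟩ := h (1 / ((n : ℝ) + 1)) (by positivity) η hη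
      refine le_trans ?_ hE
      refine ENNReal.toReal_mono (measure_ne_top _ _) (measure_mono_ae ?_)
      filter_upwards [hQ] with ω hω hn
      by_contra hc
      exact hn (hω hc)
    have h3 : P.real {ω | ¬ Q (1 / ((n : ℝ) + 1)) ω} = 0 :=
      le_antisymm (le_of_forall_pos_le_add fun η hη => by simpa using h2 η hη) measureReal_nonneg
    exact (measureReal_eq_zero_iff).1 h3
  filter_upwards [ae_all_iff.2 h1] with ω hω ε hε
  obtain ⟨n, hn⟩ := exists_nat_one_div_lt hε
  exact hmono _ _ _ hn.le (hω n)

/-- Constant attached to a box. -/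
def bconst (a b : Fin d → ℝ) : ℝ := (2 * bsize a b + 1) ^ d + ∏ i, |b i - a i| + 2

lemma bconst_pos (a b : Fin d → ℝ) : 0 < bconst a b := by
  have := bsize_pos a b
  unfold bconst; positivity

lemma BoxFam.sup_bound {a b : Fin d → ℝ} {A B : ℝ → Zd d} (h : BoxFam a b A B)
    {g : Finset (Zd d) → ℝ} (hg : SupFun g) {lam : ℝ} (hlam : 0 < lam)
    (hmax : ∀ k : ℕ, g (CN d k) ≤ lam * (CN d k).card) :
    ∀ᶠ t : ℝ in atTop, g (Finset.Icc (A t) (B t)) / t ^ d ≤ lam * (2 * bsize a b + 1) ^ d := by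
  filter_upwards [h.subset, eventually_ge_atTop (3 : ℝ)] with t ht ht3
  have h1 := (hg.mono ht).trans (hmax _)
  have h2 := CN_card_bound (d := d) (bsize a b) (bsize_pos a b) ht3
  rw [div_le_iff₀ (by positivity)]
  calc _ ≤ _ := h1
    _ ≤ lam * ((2 * bsize a b + 1) ^ d * t ^ d) := by gcongr
    _ = _ := by ring

lemma convAt_of_eps {s : Zd d → ℝ} {m : ℝ}
    (h : ∀ ε > 0, ∀ a b : Fin d → ℝ, (∀ i, a i < b i) → ∀ A B : ℝ → Zd d, BoxFam a b A B →
      ∀ᶠ t : ℝ in atTop, |(∑ z ∈ Finset.Icc (A t) (B t), s z) / t ^ d - (∏ i, (b i - a i)) * m|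
        ≤ ε * bconst a b) : ConvAt s m := by
  intro a b hab A B hAB
  rw [Metric.tendsto_nhds]
  intro ε hε
  have hb := bconst_pos a b
  filter_upwards [h (ε / (2 * bconst a b)) (by positivity) a b hab A B hAB] with t ht
  rw [Real.dist_eq]
  refine lt_of_le_of_lt ht ?_
  field_simp
  linarith

lemma goodConv_of_approx {P : Measure Ω} [IsProbabilityMeasure P] {τ : Zd d → Ω → Ω}
    (hτ : IsAct P τ) {h : Ω → ℝ} (hm : Measurable h) (hi : Integrable h P)
    (happ : ∀ η > 0, ∃ h' : Ω → ℝ, Measurable h' ∧ Integrable h' P ∧ GoodConv P τ h' ∧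
      ∫ ω, |h ω - h' ω| ∂P ≤ η) : GoodConv P τ h := by
  have key : ∀ᵐ ω ∂P, ∀ ε > 0, ∀ a b : Fin d → ℝ, (∀ i, a i < b i) → ∀ A B : ℝ → Zd d,
      BoxFam a b A B → ∀ᶠ t : ℝ in atTop, |(∑ z ∈ Finset.Icc (A t) (B t), h (τ z ω)) / t ^ d
        - (∏ i, (b i - a i)) * ∫ ω, h ω ∂P| ≤ ε * bconst a b := by
    refine ae_select _ ?_ ?_
    · intro ε ε' ω hεε hQ a b hab A B hAB
      filter_upwards [hQ a b hab A B hAB] with t ht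
      exact ht.trans (mul_le_mul_of_nonneg_right hεε (bconst_pos a b).le)
    · intro ε hε η hη
      obtain ⟨h', hm', hi', hg', hle⟩ := happ (min ε (ε * η / 5 ^ d)) (by positivity)
      have hD := supProc_sum hτ (h := fun ω => |h ω - h' ω|) (hm.sub hm').abs
        (fun ω => abs_nonneg _) (hi.sub hi').abs
      have hmax := max_ineq hτ hD (lam := ε) (δ := ε * η / 5 ^ d) hε (Eventually.of_forall fun N => by
        rw [integral_sum_act (h := fun ω => |h ω - h' ω|) hτ (hi.sub hi').abs]
        gcongr
        exact hle.trans (min_le_right _ _))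
      refine ⟨_, hmax.trans (le_of_eq ?_), ?_⟩
      · field_simp
      · filter_upwards [hg'] with ω hω hn a b hab A B hAB
        simp only [not_exists, not_le] at hn
        have h1 := hAB.sup_bound (hD.sup ω) hε (fun k => (hn k).le)
        have h2 := hω a b hab A B hAB
        rw [Metric.tendsto_nhds] at h2
        filter_upwards [h1, h2 ε hε, eventually_gt_atTop (0 : ℝ)] with t h1 h2 ht
        rw [Real.dist_eq] at h2
        have e1 : |(∑ z ∈ Finset.Icc (A t) (B t), h (τ z ω)) / t ^ d
            - (∑ z ∈ Finset.Icc (A t) (B t), h' (τ z ω)) / t ^ d| ≤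
            ε * (2 * bsize a b + 1) ^ d := by
          rw [← sub_div, ← Finset.sum_sub_distrib, abs_div, abs_of_pos (pow_pos ht d)]
          refine le_trans ?_ h1
          gcongr
          exact Finset.abs_sum_le_sum_abs _ _
        have e2 : |(∏ i, (b i - a i)) * ∫ ω, h' ω ∂P - (∏ i, (b i - a i)) * ∫ ω, h ω ∂P|
            ≤ ε * ∏ i, |b i - a i| := by
          rw [← mul_sub, abs_mul, Finset.abs_prod, mul_comm]
          gcongr
          rw [abs_sub_comm, ← integral_sub hi hi']
          exact (abs_integral_le_integral_abs).trans (hle.trans (min_le_left _ _))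
        calc _ = |((∑ z ∈ Finset.Icc (A t) (B t), h (τ z ω)) / t ^ d
            - (∑ z ∈ Finset.Icc (A t) (B t), h' (τ z ω)) / t ^ d) +
            ((∑ z ∈ Finset.Icc (A t) (B t), h' (τ z ω)) / t ^ d
              - (∏ i, (b i - a i)) * ∫ ω, h' ω ∂P) +
            ((∏ i, (b i - a i)) * ∫ ω, h' ω ∂P - (∏ i, (b i - a i)) * ∫ ω, h ω ∂P)| := by
              congr 1; ring
          _ ≤ ε * (2 * bsize a b + 1) ^ d + ε + ε * ∏ i, |b i - a i| :=
              (abs_add_three _ _ _).trans (by gcongr)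
          _ ≤ ε * bconst a b := by unfold bconst; linarith
  filter_upwards [key] with ω hω
  exact convAt_of_eps hω

lemma convAt_cobdry (s : Zd d → ℝ) (hs : ∀ z, |s z| ≤ 1) (w : Zd d) :
    ConvAt (fun z => s (z + w) - s z) 0 := by
  intro a b hab A B h
  rw [mul_zero]
  have hw := h.add w w
  have h1 := (convAt_const (d := d) 1).sdiff hab hw h
  have h2 := (convAt_const (d := d) 1).sdiff hab h hw
  have h3 := h1.add h2
  rw [add_zero] at h3
  refine squeeze_zero_norm' ?_ h3
  filter_upwards [eventually_gt_atTop (0 : ℝ)] with t ht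
  rw [← add_div, Real.norm_eq_abs, abs_div, abs_of_pos (pow_pos ht d)]
  gcongr
  rw [Finset.sum_sub_distrib, ← sum_shift, shift_Icc, ← Finset.sum_sdiff_sub_sum_sdiff]
  refine (abs_sub _ _).trans ?_
  gcongr <;> exact (Finset.abs_sum_le_sum_abs _ _).trans (Finset.sum_le_sum fun z _ => hs z)

/-- Ergodicity with respect to strictly invariant sets. -/
def IsErg (P : Measure Ω) (τ : Zd d → Ω → Ω) : Prop :=
  ∀ B : Set Ω, MeasurableSet B → (∀ z : Zd d, τ z ⁻¹' B = B) → P B = 0 ∨ P B = 1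

lemma zero_of_invariant {P : Measure Ω} [IsProbabilityMeasure P] {τ : Zd d → Ω → Ω}
    (hτ : IsAct P τ) (herg : IsErg P τ) {φ : Ω → ℝ} (hm : Measurable φ) (hi : Integrable φ P)
    (h0 : ∫ ω, φ ω ∂P = 0)
    (hinv : ∀ (B : Set Ω), MeasurableSet B → ∀ w : Zd d,
      ∫ ω in τ w ⁻¹' B, φ ω ∂P = ∫ ω in B, φ ω ∂P) : φ =ᵐ[P] 0 := by
  have h1 : ∀ w : Zd d, (fun ω => φ (τ w ω)) =ᵐ[P] φ := by
    intro w
    refine Integrable.ae_eq_of_forall_setIntegral_eq _ _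
      ((hτ.mp w).integrable_comp_of_integrable hi) hi ?_
    intro C hC _
    have hB : MeasurableSet (τ (-w) ⁻¹' C) := (hτ.mp _).measurable hC
    have hBC : τ w ⁻¹' (τ (-w) ⁻¹' C) = C := by
      rw [← Set.preimage_comp, ← hτ.add, neg_add_cancel, hτ.zero, Set.preimage_id]
    have h2 := hinv _ hB w
    rw [hBC] at h2
    rw [h2, ← integral_indicator hC, ← integral_indicator hB]
    rw [← integral_act hτ (hm.indicator hB).aestronglyMeasurable w]
    congr 1
    ext ω
    have : ω ∈ C ↔ τ w ω ∈ τ (-w) ⁻¹' C := by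
      conv_lhs => rw [← hBC]
      rfl
    simp only [Set.indicator_apply, this]
  have h2 : ∀ᵐ ω ∂P, ∀ w : Zd d, φ (τ w ω) = φ ω := ae_all_iff.2 h1
  set S : Set Ω := {ω | ∀ z : Zd d, 0 < φ (τ z ω)} with hS
  have hSm : MeasurableSet S := by
    have : S = ⋂ z : Zd d, (fun ω => φ (τ z ω)) ⁻¹' Set.Ioi 0 := by
      ext ω; simp [hS]
    rw [this]
    exact MeasurableSet.iInter fun z => (hm.comp (hτ.mp z).measurable) measurableSet_Ioi
  have hSinv : ∀ w : Zd d, τ w ⁻¹' S = S := by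
    intro w
    ext ω
    simp only [hS, Set.mem_preimage, Set.mem_ofPred_eq]
    constructor
    · intro h z
      have := h (z - w)
      have e : τ (z - w) (τ w ω) = τ z ω := by
        have := congrFun (hτ.add (z - w) w) ω
        rw [sub_add_cancel] at this
        exact this.symm
      rwa [e] at this
    · intro h z
      have := h (z + w)
      rwa [hτ.add] at this
  rcases herg S hSm hSinv with h3 | h3
  · have h4 : ∀ᵐ ω ∂P, φ ω ≤ 0 := by
      have h5 : ∀ᵐ ω ∂P, ω ∉ S := measure_eq_zero_iff_ae_notMem.1 h3
      filter_upwards [h5, h2] with ω hω h2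
      by_contra hc
      apply hω
      intro z
      rw [h2 z]
      exact not_le.1 hc
    have h5 : 0 ≤ᵐ[P] fun ω => -φ ω := by
      filter_upwards [h4] with ω hω
      simpa using hω
    have h6 := (integral_eq_zero_iff_of_nonneg_ae h5 hi.neg).1
      (by rw [integral_neg, h0, neg_zero])
    filter_upwards [h6] with ω hω
    simpa using hω
  · have h4 : ∀ᵐ ω ∂P, ω ∈ S := (prob_compl_eq_zero_iff hSm).2 h3
    have h5 : ∀ᵐ ω ∂P, 0 < φ ω := by
      filter_upwards [h4] with ω hω
      have := hω 0
      rwa [hτ.zero] at this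
    have h6 := (integral_eq_zero_iff_of_nonneg_ae (h5.mono fun ω h => h.le) hi).1 h0
    exact h6

lemma goodConv_indicator_sub {P : Measure Ω} [IsProbabilityMeasure P] {τ : Zd d → Ω → Ω}
    (hτ : IsAct P τ) {B : Set Ω} (hB : MeasurableSet B) (w : Zd d) :
    GoodConv P τ (fun ω => (τ w ⁻¹' B).indicator (fun _ => (1 : ℝ)) ω
      - B.indicator (fun _ => (1 : ℝ)) ω) := by
  refine Eventually.of_forall fun ω => ?_
  have hw : MeasurableSet (τ w ⁻¹' B) := (hτ.mp w).measurable hB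
  have hint : ∫ ω, ((τ w ⁻¹' B).indicator (fun _ => (1 : ℝ)) ω
      - B.indicator (fun _ => (1 : ℝ)) ω) ∂P = 0 := by
    rw [integral_sub ((integrable_const _).indicator hw) ((integrable_const _).indicator hB),
      integral_indicator_const _ hw, integral_indicator_const _ hB,
      (hτ.mp w).measureReal_preimage hB.nullMeasurableSet, sub_self]
  rw [hint]
  have := convAt_cobdry (fun z => B.indicator (fun _ => (1 : ℝ)) (τ z ω)) (fun z => by
    by_cases h : τ z ω ∈ B <;> simp [h]) w
  have e : ∀ z, (τ w ⁻¹' B).indicator (fun _ => (1 : ℝ)) (τ z ω)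
      = B.indicator (fun _ => (1 : ℝ)) (τ (z + w) ω) := by
    intro z
    rw [add_comm z w, hτ.add]
    rfl
  simpa only [e] using this

/-- The subspace of good functions in `L²`. -/
def goodSub (P : Measure Ω) [IsProbabilityMeasure P] (τ : Zd d → Ω → Ω) (hτ : IsAct P τ) :
    Submodule ℝ (Lp ℝ 2 P) where
  carrier := {x | GoodConv P τ x}
  zero_mem' := by
    refine GoodConv.congr hτ (Lp.coeFn_zero ℝ 2 P).symm (Eventually.of_forall fun ω => ?_)
    have := convAt_const (d := d) 0
    simpa using this
  add_mem' := by
    intro x y hx hy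
    refine GoodConv.congr hτ (Lp.coeFn_add x y).symm ?_
    filter_upwards [hx, hy] with ω h1 h2
    have := h1.add h2
    rw [← integral_add ((Lp.memLp x).integrable (by norm_num))
      ((Lp.memLp y).integrable (by norm_num))] at this
    exact this
  smul_mem' := by
    intro c x hx
    refine GoodConv.congr hτ (Lp.coeFn_smul c x).symm ?_
    filter_upwards [hx] with ω h1
    have := h1.const_mul c
    rw [← integral_const_mul] at this
    exact this

lemma goodSub_orth {P : Measure Ω} [IsProbabilityMeasure P] {τ : Zd d → Ω → Ω} (hτ : IsAct P τ)
    (herg : IsErg P τ) : (goodSub P τ hτ)ᗮ = ⊥ := by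
  rw [Submodule.eq_bot_iff]
  intro φ hφ
  rw [Submodule.mem_orthogonal] at hφ
  have hin : ∀ (B : Set Ω) (hB : MeasurableSet B),
      inner ℝ (indicatorConstLp 2 hB (measure_ne_top P B) (1 : ℝ)) φ = ∫ ω in B, φ ω ∂P :=
    fun B hB => L2.inner_indicatorConstLp_one hB (measure_ne_top P B) φ
  rw [Lp.eq_zero_iff_ae_eq_zero]
  refine zero_of_invariant hτ herg (Lp.stronglyMeasurable φ).measurable
    ((Lp.memLp φ).integrable (by norm_num)) ?_ ?_
  · have h1 := hφ (indicatorConstLp 2 MeasurableSet.univ (measure_ne_top P _) (1 : ℝ)) ?_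
    · rw [hin, setIntegral_univ] at h1
      exact h1
    · change GoodConv P τ _
      refine GoodConv.congr hτ indicatorConstLp_coeFn.symm (Eventually.of_forall fun ω => ?_)
      have := convAt_const (d := d) 1
      simpa using this
  · intro B hB w
    have hw : MeasurableSet (τ w ⁻¹' B) := (hτ.mp w).measurable hB
    have h1 := hφ (indicatorConstLp 2 hw (measure_ne_top P _) (1 : ℝ)
      - indicatorConstLp 2 hB (measure_ne_top P _) (1 : ℝ)) ?_
    · rw [inner_sub_left, hin, hin] at h1
      linarith
    · change GoodConv P τ _
      refine GoodConv.congr hτ ?_ (goodConv_indicator_sub hτ hB w)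
      refine EventuallyEq.symm ((Lp.coeFn_sub _ _).trans ?_)
      exact (indicatorConstLp_coeFn).sub (indicatorConstLp_coeFn)

lemma goodConv_L2 {P : Measure Ω} [IsProbabilityMeasure P] {τ : Zd d → Ω → Ω} (hτ : IsAct P τ)
    (herg : IsErg P τ) (f : Lp ℝ 2 P) : GoodConv P τ f := by
  have htop : (goodSub P τ hτ).topologicalClosure = ⊤ :=
    (Submodule.topologicalClosure_eq_top_iff).2 (goodSub_orth hτ herg)
  have hf : f ∈ closure (goodSub P τ hτ : Set (Lp ℝ 2 P)) := by
    rw [← Submodule.topologicalClosure_coe, htop]; trivial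
  refine goodConv_of_approx hτ (Lp.stronglyMeasurable f).measurable
    ((Lp.memLp f).integrable (by norm_num)) ?_
  intro η hη
  obtain ⟨x, hx, hd⟩ := Metric.mem_closure_iff.1 hf η hη
  refine ⟨x, (Lp.stronglyMeasurable x).measurable, (Lp.memLp x).integrable (by norm_num), hx, ?_⟩
  rw [dist_eq_norm, Lp.norm_def] at hd
  have h1 : ∫ ω, |f ω - x ω| ∂P = (eLpNorm (f - x : Lp ℝ 2 P) 1 P).toReal := by
    rw [eLpNorm_one_eq_lintegral_enorm, ← integral_norm_eq_lintegral_enorm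
      (Lp.aestronglyMeasurable _)]
    refine integral_congr_ae ?_
    filter_upwards [Lp.coeFn_sub f x] with ω hω
    rw [hω, Real.norm_eq_abs]
    rfl
  rw [h1]
  refine le_trans ?_ hd.le
  refine ENNReal.toReal_mono (Lp.memLp _).2.ne ?_
  exact eLpNorm_le_eLpNorm_of_exponent_le (by norm_num) (Lp.aestronglyMeasurable _)

/-- Multiparameter pointwise ergodic theorem along all box families. -/
theorem birkhoff {P : Measure Ω} [IsProbabilityMeasure P] {τ : Zd d → Ω → Ω} (hτ : IsAct P τ)
    (herg : IsErg P τ) {f : Ω → ℝ} (hf : Integrable f P) : GoodConv P τ f := by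
  refine Integrable.induction (fun f => GoodConv P τ f) ?_ ?_ ?_ ?_ hf
  · intro c s hs _
    exact GoodConv.congr hτ (indicatorConstLp_coeFn (p := 2) (hs := hs)
      (hμs := measure_ne_top P s) (c := c)) (goodConv_L2 hτ herg _)
  · intro f g _ hf hg h1 h2
    filter_upwards [h1, h2] with ω h1 h2
    have := h1.add h2
    rw [← integral_add hf hg] at this
    exact this
  · refine isClosed_of_closure_subset fun f hf => ?_
    refine goodConv_of_approx hτ (Lp.stronglyMeasurable f).measurable (L1.integrable_coeFn f) ?_
    intro η hη
    obtain ⟨x, hx, hd⟩ := Metric.mem_closure_iff.1 hf η hη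
    refine ⟨x, (Lp.stronglyMeasurable x).measurable, L1.integrable_coeFn x, hx, ?_⟩
    rw [L1.dist_eq_integral_dist] at hd
    simpa only [Real.dist_eq] using hd.le
  · intro f g hfg _ h
    exact h.congr hτ hfg

/-! ### Subadditive processes -/

/-- Nonnegative subadditive set functions. -/
structure SubFun (m : Finset (Zd d) → ℝ) : Prop where
  nonneg : ∀ S, 0 ≤ m S
  empty : m ∅ = 0
  subadd : ∀ S T, Disjoint S T → m (S ∪ T) ≤ m S + m T

/-- Block at `z`. -/
def blk (k : ℕ) (z : Zd d) : Finset (Zd d) := Finset.Icc z (z + cst d ((k : ℤ) - 1))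

/-- Residue class. -/
def cls (k : ℕ) (z : Zd d) : Fin d → ZMod k := fun i => (z i : ZMod k)

lemma mem_blk {k : ℕ} {z w : Zd d} : w ∈ blk k z ↔ ∀ i, z i ≤ w i ∧ w i ≤ z i + (k - 1) := by
  simp only [blk, mem_Icc_iff, Pi.add_apply, cst_apply]

lemma blk_disjoint {k : ℕ} {z z' : Zd d} (h : cls k z = cls k z') (hne : z ≠ z') :
    Disjoint (blk k z) (blk k z') := by
  rw [Finset.disjoint_left]
  intro w h1 h2
  rw [mem_blk] at h1 h2
  apply hne
  ext i
  have e := congrFun h i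
  simp only [cls] at e
  rw [ZMod.intCast_eq_intCast_iff_dvd_sub] at e
  have := Int.eq_zero_of_abs_lt_dvd e (by
    rw [abs_lt]
    have := h1 i
    have := h2 i
    constructor <;> omega)
  omega

/-- Base points of blocks in a residue class contained in `A`. -/
def bl (k : ℕ) (A : Finset (Zd d)) (y : Fin d → ZMod k) : Finset (Zd d) :=
  A.filter fun z => blk k z ⊆ A ∧ cls k z = y

/-- Union of the blocks in a residue class contained in `A`. -/
def bU (k : ℕ) (A : Finset (Zd d)) (y : Fin d → ZMod k) : Finset (Zd d) :=
  (bl k A y).biUnion (blk k)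

lemma bl_pd (k : ℕ) (A : Finset (Zd d)) (y : Fin d → ZMod k) :
    (bl k A y : Set (Zd d)).PairwiseDisjoint (blk k) := by
  intro z hz z' hz' hne
  simp only [bl, Finset.coe_filter, Set.mem_ofPred_eq] at hz hz'
  exact blk_disjoint (hz.2.2.trans hz'.2.2.symm) hne

lemma bU_subset (k : ℕ) (A : Finset (Zd d)) (y : Fin d → ZMod k) : bU k A y ⊆ A := by
  intro w hw
  simp only [bU, Finset.mem_biUnion, bl, Finset.mem_filter] at hw
  obtain ⟨z, hz, hw⟩ := hw
  exact hz.2.1 hw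

lemma subset_bU {k : ℕ} (hk : 0 < k) (a b : Zd d) (y : Fin d → ZMod k) :
    Finset.Icc a b ⊆ bU k (Finset.Icc (a - cst d k) (b + cst d k)) y := by
  have : NeZero k := ⟨hk.ne'⟩
  intro w hw
  rw [mem_Icc_iff] at hw
  simp only [bU, Finset.mem_biUnion, bl, Finset.mem_filter]
  have hv : ∀ i, (((w i : ZMod k) - y i).val : ℤ) < k := fun i => by
    exact_mod_cast ZMod.val_lt _
  refine ⟨fun i => w i - (((w i : ZMod k) - y i).val : ℤ), ⟨?_, ?_, ?_⟩, ?_⟩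
  · rw [mem_Icc_iff]
    intro i
    have h1 := hw i
    have h2 := hv i
    simp only [Pi.sub_apply, Pi.add_apply, cst_apply]
    omega
  · intro x hx
    rw [mem_blk] at hx
    rw [mem_Icc_iff]
    intro i
    have h1 := hw i
    have h2 := hv i
    have h3 := hx i
    simp only [Pi.sub_apply, Pi.add_apply, cst_apply]
    omega
  · ext i
    simp [cls]
  · rw [mem_blk]
    intro i
    have h2 := hv i
    omega

lemma SubFun.biUnion_le {m : Finset (Zd d) → ℝ} (hm : SubFun m) {k : ℕ} (Z : Finset (Zd d))
    (hZ : (Z : Set (Zd d)).PairwiseDisjoint (blk k)) :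
    m (Z.biUnion (blk k)) ≤ ∑ z ∈ Z, m (blk k z) := by
  induction Z using Finset.induction_on with
  | empty => simp [hm.empty]
  | insert a s ha ih =>
    rw [Finset.sum_insert ha, Finset.biUnion_insert]
    have h1 : (s : Set (Zd d)).PairwiseDisjoint (blk k) := hZ.subset (by simp)
    have h2 : Disjoint (blk k a) (s.biUnion (blk k)) := by
      rw [Finset.disjoint_biUnion_right]
      intro b hb
      exact hZ (by simp) (by simp [hb]) (by rintro rfl; exact ha hb)
    linarith [ih h1, hm.subadd _ _ h2]

/-- Defect of subadditivity of a family of blocks. -/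
def Dz (m : Finset (Zd d) → ℝ) (k : ℕ) (Z : Finset (Zd d)) : ℝ :=
  ∑ z ∈ Z, m (blk k z) - m (Z.biUnion (blk k))

lemma SubFun.Dz_nonneg {m : Finset (Zd d) → ℝ} (hm : SubFun m) {k : ℕ} (Z : Finset (Zd d))
    (hZ : (Z : Set (Zd d)).PairwiseDisjoint (blk k)) : 0 ≤ Dz m k Z :=
  sub_nonneg.2 (hm.biUnion_le Z hZ)

lemma SubFun.Dz_superadd {m : Finset (Zd d) → ℝ} (hm : SubFun m) {k : ℕ} (Z Z' : Finset (Zd d))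
    (hd : Disjoint Z Z')
    (hZ : ((Z ∪ Z' : Finset (Zd d)) : Set (Zd d)).PairwiseDisjoint (blk k)) :
    Dz m k Z + Dz m k Z' ≤ Dz m k (Z ∪ Z') := by
  unfold Dz
  rw [Finset.sum_union hd]
  have h1 : Disjoint (Z.biUnion (blk k)) (Z'.biUnion (blk k)) := by
    rw [Finset.disjoint_biUnion_left]
    intro a ha
    rw [Finset.disjoint_biUnion_right]
    intro b hb
    exact hZ (by simp [ha]) (by simp [hb]) (by rintro rfl; exact Finset.disjoint_left.1 hd ha hb)
  have h2 := hm.subadd _ _ h1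
  have h3 : (Z ∪ Z').biUnion (blk k) = Z.biUnion (blk k) ∪ Z'.biUnion (blk k) := by
    ext w; simp [or_and_right, exists_or]
  rw [h3]
  linarith

lemma SubFun.Dz_mono {m : Finset (Zd d) → ℝ} (hm : SubFun m) {k : ℕ} {Z Z' : Finset (Zd d)}
    (h : Z ⊆ Z') (hZ : (Z' : Set (Zd d)).PairwiseDisjoint (blk k)) : Dz m k Z ≤ Dz m k Z' := by
  have e : Z ∪ (Z' \ Z) = Z' := Finset.union_sdiff_of_subset h
  have h1 := hm.Dz_superadd Z (Z' \ Z) Finset.disjoint_sdiff (by rwa [e])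
  rw [e] at h1
  have h2 := hm.Dz_nonneg (k := k) (Z' \ Z) (hZ.subset (by
    exact_mod_cast (Finset.sdiff_subset : Z' \ Z ⊆ Z')))
  linarith

/-- Total defect, summed over all residue classes. -/
def GG (m : Finset (Zd d) → ℝ) (k : ℕ) [NeZero k] (A : Finset (Zd d)) : ℝ :=
  ∑ y : Fin d → ZMod k, Dz m k (bl k A y)

lemma SubFun.GG_sup {m : Finset (Zd d) → ℝ} (hm : SubFun m) (k : ℕ) [NeZero k] :
    SupFun (GG m k) where
  nonneg A := Finset.sum_nonneg fun y _ => hm.Dz_nonneg _ (bl_pd k A y)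
  superadd A B hAB := by
    unfold GG
    rw [← Finset.sum_add_distrib]
    refine Finset.sum_le_sum fun y _ => ?_
    have hsub : bl k A y ∪ bl k B y ⊆ bl k (A ∪ B) y := by
      intro z hz
      simp only [bl, Finset.mem_union, Finset.mem_filter] at hz ⊢
      rcases hz with hz | hz
      · exact ⟨Or.inl hz.1, hz.2.1.trans Finset.subset_union_left, hz.2.2⟩
      · exact ⟨Or.inr hz.1, hz.2.1.trans Finset.subset_union_right, hz.2.2⟩
    have hpd := (bl_pd k (A ∪ B) y)
    have hdis : Disjoint (bl k A y) (bl k B y) :=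
      Finset.disjoint_filter_filter hAB
    exact (hm.Dz_superadd _ _ hdis (hpd.subset (by exact_mod_cast hsub))).trans
      (hm.Dz_mono hsub hpd)

lemma sum_bl (k : ℕ) [NeZero k] (A : Finset (Zd d)) (s : Zd d → ℝ) :
    ∑ y : Fin d → ZMod k, ∑ z ∈ bl k A y, s z = ∑ z ∈ A.filter (fun z => blk k z ⊆ A), s z := by
  rw [← Finset.sum_fiberwise (A.filter fun z => blk k z ⊆ A) (cls k) s]
  refine Finset.sum_congr rfl fun y _ => Finset.sum_congr ?_ fun _ _ => rfl
  rw [Finset.filter_filter]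
  rfl

lemma GG_eq (m : Finset (Zd d) → ℝ) (k : ℕ) [NeZero k] (A : Finset (Zd d)) :
    GG m k A = ∑ z ∈ A.filter (fun z => blk k z ⊆ A), m (blk k z)
      - ∑ y : Fin d → ZMod k, m (bU k A y) := by
  rw [← sum_bl, ← Finset.sum_sub_distrib]
  rfl

lemma card_cls (k : ℕ) [NeZero k] : ((Fintype.card (Fin d → ZMod k) : ℕ) : ℝ) = (k : ℝ) ^ d := by
  simp [ZMod.card]

lemma SubFun.le_add_sum {m : Finset (Zd d) → ℝ} (hm : SubFun m) {s : Zd d → ℝ}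
    (hs : ∀ S, m S ≤ ∑ z ∈ S, s z) {S T : Finset (Zd d)} (h : S ⊆ T) :
    m T ≤ m S + ∑ z ∈ T \ S, s z := by
  have h1 := hm.subadd S (T \ S) Finset.disjoint_sdiff
  rw [Finset.union_sdiff_of_subset h] at h1
  linarith [hs (T \ S)]

lemma SubFun.upper_aux {m : Finset (Zd d) → ℝ} (hm : SubFun m) {s : Zd d → ℝ}
    (hs : ∀ S, m S ≤ ∑ z ∈ S, s z) (hs0 : ∀ z, 0 ≤ s z) (k : ℕ) [NeZero k] (a b : Zd d) :
    (k : ℝ) ^ d * m (Finset.Icc a b) ≤ ∑ y : Fin d → ZMod k, m (bU k (Finset.Icc a b) y)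
      + (k : ℝ) ^ d * ∑ z ∈ Finset.Icc a b \ Finset.Icc (a + cst d k) (b - cst d k), s z := by
  have h1 : ∀ y : Fin d → ZMod k, m (Finset.Icc a b) ≤ m (bU k (Finset.Icc a b) y)
      + ∑ z ∈ Finset.Icc a b \ Finset.Icc (a + cst d k) (b - cst d k), s z := by
    intro y
    refine (hm.le_add_sum hs (bU_subset k (Finset.Icc a b) y)).trans ?_
    refine add_le_add le_rfl ?_
    refine Finset.sum_le_sum_of_subset_of_nonneg ?_ fun z _ _ => hs0 z
    refine Finset.sdiff_subset_sdiff le_rfl ?_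
    have := subset_bU (NeZero.pos k) (a + cst d k) (b - cst d k) y
    rwa [add_sub_cancel_right, sub_add_cancel] at this
  have h2 := Finset.sum_le_sum fun (y : Fin d → ZMod k) (_ : y ∈ Finset.univ) => h1 y
  rw [Finset.sum_add_distrib, Finset.sum_const, Finset.sum_const, nsmul_eq_mul, nsmul_eq_mul,
    Finset.card_univ, card_cls] at h2
  exact h2

lemma SubFun.upper {m : Finset (Zd d) → ℝ} (hm : SubFun m) {s : Zd d → ℝ}
    (hs : ∀ S, m S ≤ ∑ z ∈ S, s z) (hs0 : ∀ z, 0 ≤ s z) (k : ℕ) [NeZero k] (a b : Zd d) :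
    (k : ℝ) ^ d * m (Finset.Icc a b) ≤ ∑ z ∈ Finset.Icc a b, m (blk k z)
      + (k : ℝ) ^ d * ∑ z ∈ Finset.Icc a b \ Finset.Icc (a + cst d k) (b - cst d k), s z := by
  have h1 := hm.upper_aux hs hs0 k a b
  have h2 := (hm.GG_sup k).nonneg (Finset.Icc a b)
  rw [GG_eq] at h2
  have h3 : ∑ z ∈ (Finset.Icc a b).filter (fun z => blk k z ⊆ Finset.Icc a b), m (blk k z) ≤
      ∑ z ∈ Finset.Icc a b, m (blk k z) :=
    Finset.sum_le_sum_of_subset_of_nonneg (Finset.filter_subset _ _) fun z _ _ => hm.nonneg _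
  linarith

lemma SubFun.GG_upper {m : Finset (Zd d) → ℝ} (hm : SubFun m) {s : Zd d → ℝ}
    (hs : ∀ S, m S ≤ ∑ z ∈ S, s z) (hs0 : ∀ z, 0 ≤ s z) (k : ℕ) [NeZero k] (a b : Zd d) :
    GG m k (Finset.Icc a b) ≤ ∑ z ∈ Finset.Icc a b, m (blk k z)
      - (k : ℝ) ^ d * m (Finset.Icc a b)
      + (k : ℝ) ^ d * ∑ z ∈ Finset.Icc a b \ Finset.Icc (a + cst d k) (b - cst d k), s z := by
  have h1 := hm.upper_aux hs hs0 k a b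
  rw [GG_eq]
  have h3 : ∑ z ∈ (Finset.Icc a b).filter (fun z => blk k z ⊆ Finset.Icc a b), m (blk k z) ≤
      ∑ z ∈ Finset.Icc a b, m (blk k z) :=
    Finset.sum_le_sum_of_subset_of_nonneg (Finset.filter_subset _ _) fun z _ _ => hm.nonneg _
  linarith

lemma SubFun.lower {m : Finset (Zd d) → ℝ} (hm : SubFun m) {s : Zd d → ℝ}
    (hs : ∀ S, m S ≤ ∑ z ∈ S, s z) (hs0 : ∀ z, 0 ≤ s z) (k : ℕ) [NeZero k] (a b : Zd d) :
    ∑ z ∈ Finset.Icc a b, m (blk k z) ≤ (k : ℝ) ^ d * m (Finset.Icc a b)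
      + (k : ℝ) ^ d * ∑ z ∈ Finset.Icc (a - cst d k) (b + cst d k) \ Finset.Icc a b, s z
      + GG m k (Finset.Icc (a - cst d k) (b + cst d k)) := by
  set A := Finset.Icc (a - cst d k) (b + cst d k) with hA
  have hk : 0 < k := NeZero.pos k
  have h1 : ∀ y : Fin d → ZMod k, m (bU k A y) ≤ m (Finset.Icc a b)
      + ∑ z ∈ A \ Finset.Icc a b, s z := by
    intro y
    refine (hm.le_add_sum hs (subset_bU hk a b y)).trans ?_
    refine add_le_add le_rfl ?_
    refine Finset.sum_le_sum_of_subset_of_nonneg ?_ fun z _ _ => hs0 z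
    exact Finset.sdiff_subset_sdiff (bU_subset k A y) le_rfl
  have h2 := Finset.sum_le_sum fun (y : Fin d → ZMod k) (_ : y ∈ Finset.univ) => h1 y
  rw [Finset.sum_const, nsmul_eq_mul, Finset.card_univ, card_cls] at h2
  rw [GG_eq]
  have h3 : ∑ z ∈ Finset.Icc a b, m (blk k z) ≤
      ∑ z ∈ A.filter (fun z => blk k z ⊆ A), m (blk k z) := by
    refine Finset.sum_le_sum_of_subset_of_nonneg ?_ fun z _ _ => hm.nonneg _
    intro z hz
    rw [mem_Icc_iff] at hz
    rw [Finset.mem_filter]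
    constructor
    · rw [hA, mem_Icc_iff]
      intro i
      have := hz i
      simp only [Pi.sub_apply, Pi.add_apply, cst_apply]
      omega
    · intro x hx
      rw [mem_blk] at hx
      rw [hA, mem_Icc_iff]
      intro i
      have := hz i
      have := hx i
      simp only [Pi.sub_apply, Pi.add_apply, cst_apply]
      omega
  linarith

/-- Stationary dominated subadditive processes. -/
structure SubProc (P : Measure Ω) (τ : Zd d → Ω → Ω) (M : Ω → Finset (Zd d) → ℝ)
    (f : Ω → ℝ) : Prop where
  sub : ∀ ω, SubFun (M ω)
  stat : ∀ w ω S, M (τ w ω) S = M ω (shift w S)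
  meas : ∀ S, Measurable fun ω => M ω S
  fint : Integrable f P
  f0 : ∀ ω, 0 ≤ f ω
  le : ∀ ω S, M ω S ≤ ∑ z ∈ S, f (τ z ω)

section
variable {P : Measure Ω} [IsProbabilityMeasure P] {τ : Zd d → Ω → Ω} {M : Ω → Finset (Zd d) → ℝ}
  {f : Ω → ℝ}

lemma SubProc.integ (hM : SubProc P τ M f) (hτ : IsAct P τ) (S : Finset (Zd d)) :
    Integrable (fun ω => M ω S) P := by
  refine Integrable.mono' (g := fun ω => ∑ z ∈ S, f (τ z ω))
    (integrable_finsetSum _ fun z _ => (hτ.mp z).integrable_comp_of_integrable hM.fint)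
    (hM.meas S).aestronglyMeasurable (Eventually.of_forall fun ω => ?_)
  rw [Real.norm_eq_abs, abs_of_nonneg ((hM.sub ω).nonneg S)]
  exact hM.le ω S

lemma SubProc.integral_shift (hM : SubProc P τ M f) (hτ : IsAct P τ) (w : Zd d)
    (S : Finset (Zd d)) : ∫ ω, M ω (shift w S) ∂P = ∫ ω, M ω S ∂P := by
  rw [← integral_act hτ (h := fun ω => M ω S) (hM.integ hτ S).1 w]
  simp only [hM.stat]

lemma blk_add (k : ℕ) (z w : Zd d) : blk k (z + w) = shift w (blk k z) := by
  rw [blk, blk, shift_Icc, add_right_comm]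

lemma shift_biUnion (k : ℕ) (w : Zd d) (Z : Finset (Zd d)) :
    (shift w Z).biUnion (blk k) = shift w (Z.biUnion (blk k)) := by
  ext x
  simp only [Finset.mem_biUnion, mem_shift]
  constructor
  · rintro ⟨z, hz, hx⟩
    refine ⟨z - w, hz, ?_⟩
    rw [← mem_shift, ← blk_add, sub_add_cancel]
    exact hx
  · rintro ⟨z, hz, hx⟩
    refine ⟨z + w, by simpa using hz, ?_⟩
    rw [blk_add, mem_shift]
    exact hx

lemma bl_shift (k : ℕ) (w : Zd d) (A : Finset (Zd d)) (y : Fin d → ZMod k) :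
    bl k (shift w A) (y + cls k w) = shift w (bl k A y) := by
  ext z
  have hb : blk k z ⊆ shift w A ↔ blk k (z - w) ⊆ A := by
    have e : blk k z = shift w (blk k (z - w)) := by rw [← blk_add, sub_add_cancel]
    rw [e]
    exact Finset.map_subset_map
  have hc : cls k z = y + cls k w ↔ cls k (z - w) = y := by
    rw [← sub_eq_iff_eq_add]
    have : cls k (z - w) = cls k z - cls k w := by
      ext i; simp [cls]
    rw [this]
  simp only [bl, Finset.mem_filter, mem_shift, hb, hc]

lemma SubProc.GG_stat (hM : SubProc P τ M f) (k : ℕ) [NeZero k] (w : Zd d) (ω : Ω)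
    (A : Finset (Zd d)) : GG (M (τ w ω)) k A = GG (M ω) k (shift w A) := by
  unfold GG
  rw [← Equiv.sum_comp (Equiv.addRight (cls k w)) fun y => Dz (M ω) k (bl k (shift w A) y)]
  refine Finset.sum_congr rfl fun y _ => ?_
  rw [Equiv.coe_addRight, bl_shift]
  unfold Dz
  rw [sum_shift, shift_biUnion, hM.stat]
  congr 1
  refine Finset.sum_congr rfl fun z _ => ?_
  rw [hM.stat, blk_add]

lemma SubProc.GG_proc (hM : SubProc P τ M f) (hτ : IsAct P τ) (k : ℕ) [NeZero k] :
    SupProc P τ (fun ω A => GG (M ω) k A) where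
  sup ω := (hM.sub ω).GG_sup k
  stat w ω S := hM.GG_stat k w ω S
  meas S := Finset.measurable_fun_sum _ fun y _ =>
    (Finset.measurable_fun_sum _ fun z _ => hM.meas _).sub (hM.meas _)
  integ S := integrable_finsetSum _ fun y _ =>
    (integrable_finsetSum _ fun z _ => hM.integ hτ _).sub (hM.integ hτ _)

lemma SubProc.blk_eq (hM : SubProc P τ M f) (k : ℕ) (z : Zd d) (ω : Ω) :
    M ω (blk k z) = M (τ z ω) (blk k 0) := by
  rw [hM.stat, ← blk_add, zero_add]

lemma SubProc.GG_integral (hM : SubProc P τ M f) (hτ : IsAct P τ) (k : ℕ) [NeZero k] {W : ℝ}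
    (hW : ∀ k : ℕ, 0 < k → W * (k : ℝ) ^ d ≤ ∫ ω, M ω (blk k 0) ∂P) {e : ℝ} (he : 0 < e) :
    ∀ᶠ N in atTop, ∫ ω, GG (M ω) k (CN d N) ∂P
      ≤ (∫ ω, M ω (blk k 0) ∂P - (k : ℝ) ^ d * W + e) * (CN d N).card := by
  have hk : (0 : ℝ) < k := by exact_mod_cast NeZero.pos k
  have hf0 : 0 ≤ ∫ ω, f ω ∂P := integral_nonneg hM.f0
  set I := ∫ ω, f ω ∂P with hI
  obtain ⟨N0, hN0⟩ := eventually_atTop.1 ((CN_ratio d k).eventually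
    (gt_mem_nhds (show (1 : ℝ) < 1 + e / ((k : ℝ) ^ d * (I + 1)) by
      have : 0 < e / ((k : ℝ) ^ d * (I + 1)) := by positivity
      linarith)))
  refine eventually_atTop.2 ⟨N0 + k, fun N hN => ?_⟩
  obtain ⟨N', rfl⟩ : ∃ N', N = N' + k := ⟨N - k, by omega⟩
  have hN' := hN0 N' (by omega)
  rw [div_lt_iff₀ (card_CN_pos N')] at hN'
  have hinner : Finset.Icc (cst d (-((N' + k : ℕ) : ℤ)) + cst d k) (cst d ((N' + k : ℕ) : ℤ) - cst d k)
      = CN d N' := by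
    unfold CN
    congr 1 <;> ext i <;> simp
  have hpt : ∀ ω, GG (M ω) k (CN d (N' + k)) ≤ ∑ z ∈ CN d (N' + k), M (τ z ω) (blk k 0)
      - (k : ℝ) ^ d * M ω (CN d (N' + k))
      + (k : ℝ) ^ d * ∑ z ∈ CN d (N' + k) \ CN d N', f (τ z ω) := by
    intro ω
    have := (hM.sub ω).GG_upper (s := fun z => f (τ z ω)) (hM.le ω) (fun z => hM.f0 _) k
      (cst d (-((N' + k : ℕ) : ℤ))) (cst d ((N' + k : ℕ) : ℤ))
    rw [hinner] at this
    have hs : ∀ S : Finset (Zd d), ∑ z ∈ S, M ω (blk k z) = ∑ z ∈ S, M (τ z ω) (blk k 0) :=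
      fun S => Finset.sum_congr rfl fun z _ => hM.blk_eq k z ω
    rw [hs] at this
    exact this
  have hg := hM.integ hτ (blk k 0)
  have i1 : Integrable (fun ω => ∑ z ∈ CN d (N' + k), M (τ z ω) (blk k 0)) P :=
    integrable_finsetSum _ fun z _ => (hτ.mp z).integrable_comp_of_integrable hg
  have i2 : Integrable (fun ω => (k : ℝ) ^ d * M ω (CN d (N' + k))) P :=
    (hM.integ hτ _).const_mul _
  have i3 : Integrable (fun ω => (k : ℝ) ^ d * ∑ z ∈ CN d (N' + k) \ CN d N', f (τ z ω)) P :=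
    (integrable_finsetSum _ fun z _ =>
      (hτ.mp z).integrable_comp_of_integrable hM.fint).const_mul _
  have h1 := integral_mono ((hM.GG_proc hτ k).integ _) ((i1.sub i2).add i3) hpt
  refine h1.trans ?_
  rw [integral_add' (i1.sub i2) i3, integral_sub' i1 i2, integral_const_mul, integral_const_mul,
    integral_sum_act hτ hM.fint, integral_sum_act (h := fun ω => M ω (blk k 0)) hτ hg]
  have hcube : CN d (N' + k) = shift (cst d (-((N' + k : ℕ) : ℤ))) (blk (2 * (N' + k) + 1) 0) := by
    rw [blk, shift_Icc, CN]
    congr 1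
    · ext i; simp
    · ext i; simp; ring
  have h2 : W * (CN d (N' + k)).card ≤ ∫ ω, M ω (CN d (N' + k)) ∂P := by
    have := hW (2 * (N' + k) + 1) (by omega)
    rw [card_CN, hcube, hM.integral_shift hτ]
    exact_mod_cast this
  have h3 : ((CN d (N' + k) \ CN d N').card : ℝ) = (CN d (N' + k)).card - (CN d N').card := by
    rw [Finset.card_sdiff_of_subset (CN_mono (by omega)), Nat.cast_sub]
    exact Finset.card_le_card (CN_mono (by omega))
  have h4 : ((CN d N').card : ℝ) ≤ (CN d (N' + k)).card := by
    exact_mod_cast Finset.card_le_card (CN_mono (by omega))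
  have h5 : (k : ℝ) ^ d * (I * (CN d (N' + k) \ CN d N').card) ≤ e * (CN d (N' + k)).card := by
    have h6 : ((CN d (N' + k) \ CN d N').card : ℝ) ≤
        e / ((k : ℝ) ^ d * (I + 1)) * (CN d (N' + k)).card := by
      rw [h3]
      have : e / ((k : ℝ) ^ d * (I + 1)) * (CN d N').card ≤
        e / ((k : ℝ) ^ d * (I + 1)) * (CN d (N' + k)).card := by gcongr
      linarith
    calc (k : ℝ) ^ d * (I * (CN d (N' + k) \ CN d N').card)
        ≤ (k : ℝ) ^ d * ((I + 1) * (e / ((k : ℝ) ^ d * (I + 1)) * (CN d (N' + k)).card)) := by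
          gcongr; linarith
      _ = e * (CN d (N' + k)).card := by field_simp
  have h7 := mul_le_mul_of_nonneg_left h2 (show 0 ≤ (k : ℝ) ^ d by positivity)
  linarith

lemma abs_eps_aux {x v W e ε S1 S2 S3 g p q : ℝ} (hv0 : 0 ≤ v) (hvp : v ≤ p)
    (hW : W ≤ e) (he : e ≤ W + ε) (hε : 0 < ε) (h1 : |S1 - v * e| < ε) (h2 : |S2 - 0| < ε)
    (h3 : |S3 - 0| < ε) (hg : g ≤ ε * q) (hup : x ≤ S1 + S2) (hlo : S1 ≤ x + S3 + g)
    (hq : 0 ≤ q) : |x - v * W| ≤ ε * (q + p + 2) := by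
  rw [abs_lt] at h1 h2 h3
  have e1 : v * W ≤ v * e := by gcongr
  have e2 : v * e ≤ v * W + v * ε := by nlinarith
  have e3 : v * ε ≤ p * ε := by gcongr
  have e4 : 0 ≤ ε * q := by positivity
  have e5 : 0 ≤ v * ε := by positivity
  rw [abs_le]
  constructor <;> nlinarith

/-- Multiparameter subadditive ergodic theorem along all box families. -/
theorem subadd_ergodic (hM : SubProc P τ M f) (hτ : IsAct P τ) (herg : IsErg P τ) {W : ℝ}
    (hW : ∀ k : ℕ, 0 < k → W ≤ ((k : ℝ) ^ d)⁻¹ * ∫ ω, M ω (blk k 0) ∂P)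
    (hW' : ∀ ε > 0, ∃ k : ℕ, 0 < k ∧ ((k : ℝ) ^ d)⁻¹ * ∫ ω, M ω (blk k 0) ∂P < W + ε) :
    ∀ᵐ ω ∂P, ∀ a b : Fin d → ℝ, (∀ i, a i < b i) → ∀ A B : ℝ → Zd d, BoxFam a b A B →
      Tendsto (fun t : ℝ => M ω (Finset.Icc (A t) (B t)) / t ^ d) atTop
        (𝓝 ((∏ i, (b i - a i)) * W)) := by
  have key : ∀ᵐ ω ∂P, ∀ ε > 0, ∀ a b : Fin d → ℝ, (∀ i, a i < b i) → ∀ A B : ℝ → Zd d,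
      BoxFam a b A B → ∀ᶠ t : ℝ in atTop, |M ω (Finset.Icc (A t) (B t)) / t ^ d
        - (∏ i, (b i - a i)) * W| ≤ ε * bconst a b := by
    refine ae_select _ ?_ ?_
    · intro ε ε' ω hεε hQ a b hab A B hAB
      filter_upwards [hQ a b hab A B hAB] with t ht
      exact ht.trans (mul_le_mul_of_nonneg_right hεε (bconst_pos a b).le)
    · intro ε hε η hη
      obtain ⟨k, hk, hkW⟩ := hW' (min ε (ε * η / (2 * 5 ^ d))) (by positivity)
      have : NeZero k := ⟨hk.ne'⟩
      have hk0 : (0 : ℝ) < (k : ℝ) ^ d := by positivity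
      set J := ∫ ω, M ω (blk k 0) ∂P with hJ
      set e := ((k : ℝ) ^ d)⁻¹ * J with he
      have hJe : J = (k : ℝ) ^ d * e := by rw [he]; field_simp
      have hD := hM.GG_proc hτ k
      have hGi := hM.GG_integral hτ k (W := W) (fun k hk => by
        have h1 := hW k hk
        rw [inv_mul_eq_div, le_div_iff₀ (by positivity)] at h1
        exact h1) (e := (k : ℝ) ^ d * (ε * η / (2 * 5 ^ d))) (by positivity)
      have hmax := max_ineq hτ hD (lam := ε * (k : ℝ) ^ d) (δ := (k : ℝ) ^ d * (ε * η / 5 ^ d))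
        (by positivity) (hGi.mono fun N hN => hN.trans (by
          refine mul_le_mul_of_nonneg_right ?_ (Nat.cast_nonneg _)
          rw [← hJ, hJe]
          have h1 : e - W ≤ ε * η / (2 * 5 ^ d) := by
            have := min_le_right ε (ε * η / (2 * 5 ^ d))
            linarith
          have h2 := mul_le_mul_of_nonneg_left h1 hk0.le
          have h3 : ε * η / (5 : ℝ) ^ d = ε * η / (2 * 5 ^ d) + ε * η / (2 * 5 ^ d) := by
            field_simp; ring
          rw [h3]
          linarith))
      refine ⟨_, hmax.trans (le_of_eq ?_), ?_⟩
      · field_simp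
      · have hB1 := birkhoff hτ herg hM.fint
        have hB2 := birkhoff hτ herg (hM.integ hτ (blk k 0))
        filter_upwards [hB1, hB2] with ω hω1 hω2 hn a b hab A B hAB
        simp only [not_exists, not_le] at hn
        have hABp := hAB.add (-cst d k) (cst d k)
        have hABm := hAB.add (cst d k) (-cst d k)
        have h1 := hABp.sup_bound (hD.sup ω) (show 0 < ε * (k : ℝ) ^ d by positivity)
          (fun k => (hn k).le)
        have h2 := hω2.const_mul (((k : ℝ) ^ d)⁻¹) a b hab A B hAB
        have h3 := hω1.sdiff hab hAB hABm
        have h4 := hω1.sdiff hab hABp hAB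
        rw [Metric.tendsto_nhds] at h2 h3 h4
        filter_upwards [h1, h2 ε hε, h3 ε hε, h4 ε hε, eventually_gt_atTop (0 : ℝ)]
          with t h1 h2 h3 h4 ht
        rw [Real.dist_eq] at h2 h3 h4
        have htd : 0 < t ^ d := pow_pos ht d
        have hup := (hM.sub ω).upper (s := fun z => f (τ z ω)) (hM.le ω) (fun z => hM.f0 _) k
          (A t) (B t)
        have hlo := (hM.sub ω).lower (s := fun z => f (τ z ω)) (hM.le ω) (fun z => hM.f0 _) k
          (A t) (B t)
        have hs : ∀ S : Finset (Zd d), ∑ z ∈ S, M ω (blk k z) = ∑ z ∈ S, M (τ z ω) (blk k 0) :=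
          fun S => Finset.sum_congr rfl fun z _ => hM.blk_eq k z ω
        rw [hs] at hup hlo
        simp only [← sub_eq_add_neg] at h1 h3 h4
        have hprod : ∏ i, |b i - a i| = ∏ i, (b i - a i) :=
          Finset.prod_congr rfl fun i _ => abs_of_pos (sub_pos.2 (hab i))
        have hbs := bsize_pos a b
        unfold bconst
        refine abs_eps_aux (e := e)
          (g := (((k : ℝ) ^ d)⁻¹ * GG (M ω) k (Finset.Icc (A t - cst d k) (B t + cst d k))) / t ^ d)
          (Finset.prod_nonneg fun i _ => (sub_pos.2 (hab i)).le) hprod.ge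
          (hW k hk) (hkW.le.trans (by gcongr; exact min_le_left _ _)) hε h2 h3 h4 ?_ ?_ ?_
          (by positivity)
        · rw [mul_div_assoc, inv_mul_le_iff₀ hk0]
          refine h1.trans (le_of_eq ?_)
          ring
        · rw [← add_div]
          gcongr
          rw [← Finset.mul_sum, ← sub_nonneg]
          have h9 := mul_nonneg (inv_nonneg.2 hk0.le) (sub_nonneg.2 hup)
          refine h9.trans (le_of_eq ?_)
          field_simp
        · rw [← add_div, ← add_div]
          gcongr
          rw [← Finset.mul_sum, ← sub_nonneg]
          have h9 := mul_nonneg (inv_nonneg.2 hk0.le) (sub_nonneg.2 hlo)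
          refine h9.trans (le_of_eq ?_)
          field_simp
  filter_upwards [key] with ω h a b hab A B hAB
  rw [Metric.tendsto_nhds]
  intro ε hε
  have hb := bconst_pos a b
  filter_upwards [h (ε / (2 * bconst a b)) (by positivity) a b hab A B hAB] with t ht
  rw [Real.dist_eq]
  refine lt_of_le_of_lt ht ?_
  field_simp
  linarith

end

/-- The lattice points of `A` are exactly the elements of `S`. -/
def Lat (A : Set (Rd d)) (S : Finset (Zd d)) : Prop := ∀ z : Zd d, toRd z ∈ A ↔ z ∈ S

lemma toRd_apply (z : Zd d) (i : Fin d) : toRd z i = (z i : ℝ) := rfl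

lemma toRd_add (z w : Zd d) : toRd (z + w) = toRd z + toRd w := by
  ext i
  simp [toRd_apply]

section
variable {τ : Zd d → Ω → Ω} {E0 : Finset (Zd d)} {V : Zd d → Ω → Rn n → ℝ}

lemma energy1_eq {A : Set (Rd d)} {S : Finset (Zd d)} (h : Lat A S) (ω : Ω) (u : Zd d → Rn n) :
    energy1 τ E0 V ω u A
      = ∑ z ∈ S, ∑ b ∈ E0, V b (τ z ω) ((‖toRd b‖)⁻¹ • (u (z + b) - u z)) := by
  unfold energy1
  rw [tsum_eq_sum (s := S)]
  · refine Finset.sum_congr rfl fun z hz => ?_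
    rw [if_pos ((h z).2 hz)]
  · intro z hz
    rw [if_neg fun hh => hz ((h z).1 hh)]

lemma energy1_nonneg (hV : ∀ b ∈ E0, ∀ (ω : Ω) (r : Rn n), 0 ≤ V b ω r) (A : Set (Rd d)) (ω : Ω)
    (u : Zd d → Rn n) : 0 ≤ energy1 τ E0 V ω u A := by
  unfold energy1
  refine tsum_nonneg fun z => ?_
  split_ifs
  · exact Finset.sum_nonneg fun b hb => hV b hb _ _
  · exact le_rfl

lemma mF_nonneg (hV : ∀ b ∈ E0, ∀ (ω : Ω) (r : Rn n), 0 ≤ V b ω r) (A : Set (Rd d)) (ω : Ω)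
    (F : Rd d →L[ℝ] Rn n) : 0 ≤ mF τ E0 V ω F A :=
  Real.iInf_nonneg fun _ => energy1_nonneg hV _ _ _

lemma mF_le (hV : ∀ b ∈ E0, ∀ (ω : Ω) (r : Rn n), 0 ≤ V b ω r) (A : Set (Rd d)) (ω : Ω)
    (F : Rd d →L[ℝ] Rn n) (φ : Zd d → Rn n)
    (hφ : ∀ z : Zd d, infDist (toRd z) Aᶜ ≤ irange d E0 → φ z = 0) :
    mF τ E0 V ω F A ≤ energy1 τ E0 V ω (fun z => F (toRd z) + φ z) A :=
  ciInf_le (f := fun φ : {φ : Zd d → Rn n // ∀ z : Zd d, infDist (toRd z) Aᶜ ≤ irange d E0 → φ z = 0} =>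
    energy1 τ E0 V ω (fun z => F (toRd z) + φ.1 z) A)
    ⟨0, by rintro _ ⟨ψ, rfl⟩; exact energy1_nonneg hV _ _ _⟩ ⟨φ, hφ⟩

lemma irange_nonneg : 0 ≤ irange d E0 := le_max_of_le_left (by positivity)

lemma norm_le_irange {b : Zd d} (hb : b ∈ E0) : ‖toRd b‖ ≤ irange d E0 := by
  refine le_max_of_le_right (le_csSup ?_ ⟨b, hb, rfl⟩)
  exact (E0.finite_toSet.image _).bddAbove

lemma adm_near {A : Set (Rd d)} {φ : Zd d → Rn n}
    (hφ : ∀ z : Zd d, infDist (toRd z) Aᶜ ≤ irange d E0 → φ z = 0) {z : Zd d}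
    (hz : toRd z ∉ A) : φ z = 0 ∧ ∀ b ∈ E0, φ (z + b) = 0 := by
  constructor
  · refine hφ z ?_
    rw [infDist_zero_of_mem (show toRd z ∈ Aᶜ from hz)]
    exact irange_nonneg
  · intro b hb
    refine hφ _ ((infDist_le_dist_of_mem (show toRd z ∈ Aᶜ from hz)).trans ?_)
    rw [toRd_add, dist_eq_norm, add_sub_cancel_left]
    exact norm_le_irange hb

instance adm_nonempty (A : Set (Rd d)) :
    Nonempty {φ : Zd d → Rn n // ∀ z : Zd d, infDist (toRd z) Aᶜ ≤ irange d E0 → φ z = 0} :=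
  ⟨⟨fun _ => 0, fun _ _ => rfl⟩⟩

lemma mF_union (hd : 0 < d) (hV : ∀ b ∈ E0, ∀ (ω : Ω) (r : Rn n), 0 ≤ V b ω r)
    {A₁ A₂ : Set (Rd d)} {S₁ S₂ : Finset (Zd d)} (h₁ : Lat A₁ S₁) (h₂ : Lat A₂ S₂)
    (hdisj : Disjoint A₁ A₂) (ω : Ω) (F : Rd d →L[ℝ] Rn n) :
    mF τ E0 V ω F (A₁ ∪ A₂) ≤ mF τ E0 V ω F A₁ + mF τ E0 V ω F A₂ := by
  have hne : ((A₁ ∪ A₂)ᶜ).Nonempty := by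
    haveI : Nonempty (Fin d) := ⟨⟨0, hd⟩⟩
    obtain ⟨z, hz⟩ := Infinite.exists_notMem_finset (S₁ ∪ S₂)
    refine ⟨toRd z, ?_⟩
    rw [Finset.mem_union] at hz
    rintro (h | h)
    · exact hz (Or.inl ((h₁ z).1 h))
    · exact hz (Or.inr ((h₂ z).1 h))
  have h₁₂ : Lat (A₁ ∪ A₂) (S₁ ∪ S₂) := by
    intro z
    rw [Finset.mem_union, ← h₁ z, ← h₂ z]
    exact Iff.rfl
  have hS : Disjoint S₁ S₂ := by
    rw [Finset.disjoint_left]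
    intro z h1 h2
    exact Set.disjoint_left.1 hdisj ((h₁ z).2 h1) ((h₂ z).2 h2)
  refine le_ciInf_add_ciInf fun φ₁ φ₂ => ?_
  refine (mF_le hV _ ω F (fun z => φ₁.1 z + φ₂.1 z) ?_).trans (le_of_eq ?_)
  · intro z hz
    rw [φ₁.2 z, φ₂.2 z, add_zero]
    · exact (infDist_le_infDist_of_subset (compl_subset_compl.2 subset_union_right) hne).trans hz
    · exact (infDist_le_infDist_of_subset (compl_subset_compl.2 subset_union_left) hne).trans hz
  · rw [energy1_eq h₁₂, energy1_eq h₁, energy1_eq h₂, Finset.sum_union hS]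
    congr 1
    · refine Finset.sum_congr rfl fun z hz => Finset.sum_congr rfl fun b hb => ?_
      obtain ⟨e1, e2⟩ := adm_near φ₂.2 (z := z)
        fun hh => Set.disjoint_left.1 hdisj ((h₁ z).2 hz) hh
      rw [e1, e2 b hb]
      simp
    · refine Finset.sum_congr rfl fun z hz => Finset.sum_congr rfl fun b hb => ?_
      obtain ⟨e1, e2⟩ := adm_near φ₁.2 (z := z)
        fun hh => Set.disjoint_left.1 hdisj hh ((h₂ z).2 hz)
      rw [e1, e2 b hb]
      simp

/-- The dominating function. -/
def fdom (E0 : Finset (Zd d)) (lam : Zd d → Ω → ℝ) (p c₁ : ℝ) (F : Rd d →L[ℝ] Rn n) (ω : Ω) : ℝ :=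
  ∑ b ∈ E0, c₁ * (1 + lam b ω * (‖(‖toRd b‖)⁻¹ • F (toRd b)‖ ^ p + 1))

lemma mF_le_fdom (hV : ∀ b ∈ E0, ∀ (ω : Ω) (r : Rn n), 0 ≤ V b ω r) {lam : Zd d → Ω → ℝ}
    {p c₁ : ℝ} (hg : ∀ b ∈ E0, ∀ (ω : Ω) (r : Rn n),
      V b ω r ≤ c₁ * (1 + lam b ω * (‖r‖ ^ p + 1)))
    {A : Set (Rd d)} {S : Finset (Zd d)} (h : Lat A S) (ω : Ω) (F : Rd d →L[ℝ] Rn n) :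
    mF τ E0 V ω F A ≤ ∑ z ∈ S, fdom E0 lam p c₁ F (τ z ω) := by
  refine (mF_le hV A ω F (fun _ => 0) fun _ _ => rfl).trans ?_
  rw [energy1_eq h]
  refine Finset.sum_le_sum fun z _ => Finset.sum_le_sum fun b hb => ?_
  refine (hg b hb _ _).trans (le_of_eq ?_)
  rw [toRd_add, map_add]
  simp

lemma mF_stat (hτadd : ∀ x y : Zd d, τ (x + y) = τ x ∘ τ y)
    {A A' : Set (Rd d)} {w : Zd d} (hA : ∀ x, x + toRd w ∈ A' ↔ x ∈ A)
    (hV : ∀ b ∈ E0, ∀ (ω : Ω) (r : Rn n), 0 ≤ V b ω r)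
    (ω : Ω) (F : Rd d →L[ℝ] Rn n) :
    mF τ E0 V (τ w ω) F A = mF τ E0 V ω F A' := by
  have hen : ∀ φ : Zd d → Rn n, energy1 τ E0 V ω (fun z => F (toRd z) + φ z) A'
      = energy1 τ E0 V (τ w ω) (fun z => F (toRd z) + φ (z + w)) A := by
    intro φ
    unfold energy1
    rw [← (Equiv.addRight w).tsum_eq]
    refine tsum_congr fun z => ?_
    simp only [Equiv.coe_addRight]
    have hmem : toRd (z + w) ∈ A' ↔ toRd z ∈ A := by
      rw [toRd_add z w]
      exact hA _
    refine if_congr hmem (Finset.sum_congr rfl fun b _ => ?_) rfl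
    rw [hτadd z w, Function.comp_apply]
    congr 2
    rw [show z + w + b = z + b + w by abel, toRd_add (z + b) w, toRd_add z w, map_add, map_add]
    abel
  have himg : A'ᶜ = (fun x => x + toRd w) '' Aᶜ := by
    ext x
    simp only [mem_compl_iff, mem_image]
    constructor
    · intro hx
      refine ⟨x - toRd w, ?_, by abel⟩
      rw [← hA, sub_add_cancel]
      exact hx
    · rintro ⟨y, hy, rfl⟩
      rwa [hA]
  have hdist : ∀ z : Zd d, infDist (toRd (z + w)) A'ᶜ = infDist (toRd z) Aᶜ := by
    intro z
    rw [himg, toRd_add]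
    exact infDist_image (Φ := fun x => x + toRd w) (isometry_add_right _)
  apply le_antisymm
  · refine le_ciInf fun φ => ?_
    rw [hen]
    exact mF_le hV A _ F (fun z => φ.1 (z + w)) fun z hz => φ.2 _ (by rwa [hdist])
  · refine le_ciInf fun φ => ?_
    have := hen (fun z => φ.1 (z - w))
    simp only [add_sub_cancel_right] at this
    rw [← this]
    refine mF_le hV A' _ F (fun z => φ.1 (z - w)) fun z hz => φ.2 _ ?_
    rw [← hdist, sub_add_cancel]
    exact hz

lemma mF_meas (hτm : ∀ z, Measurable (τ z))
    (hVmeas : ∀ b ∈ E0, Measurable fun q : Ω × Rn n => V b q.1 q.2)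
    (hVcont : ∀ b ∈ E0, ∀ ω : Ω, Continuous (V b ω))
    (hV : ∀ b ∈ E0, ∀ (ω : Ω) (r : Rn n), 0 ≤ V b ω r)
    {A : Set (Rd d)} {S : Finset (Zd d)} (h : Lat A S) (F : Rd d →L[ℝ] Rn n) :
    Measurable fun ω => mF τ E0 V ω F A := by
  set X := {φ : Zd d → Rn n // ∀ z : Zd d, infDist (toRd z) Aᶜ ≤ irange d E0 → φ z = 0} with hX
  haveI : Nonempty X := adm_nonempty A
  haveI : SecondCountableTopology X := TopologicalSpace.Subtype.secondCountableTopology _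
  set en : Ω → X → ℝ := fun ω φ => energy1 τ E0 V ω (fun z => F (toRd z) + φ.1 z) A with hen
  have hcont : ∀ ω, Continuous (en ω) := by
    intro ω
    simp only [hen, energy1_eq h]
    refine continuous_finsetSum _ fun z _ => continuous_finsetSum _ fun b hb => ?_
    refine (hVcont b hb _).comp ?_
    have h1 : ∀ z : Zd d, Continuous fun φ : X => φ.1 z := fun z =>
      (continuous_apply z).comp continuous_subtype_val
    exact Continuous.const_smul (M := ℝ)
      ((continuous_const.add (h1 _)).sub (continuous_const.add (h1 _))) _
  have hmeas : ∀ φ, Measurable fun ω => en ω φ := by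
    intro φ
    simp only [hen, energy1_eq h]
    refine Finset.measurable_sum _ fun z _ => Finset.measurable_sum _ fun b hb => ?_
    exact (hVmeas b hb).comp ((hτm z).prodMk measurable_const)
  have hbdd : ∀ ω, BddBelow (Set.range (en ω)) := fun ω =>
    ⟨0, by rintro _ ⟨ψ, rfl⟩; exact energy1_nonneg hV _ _ _⟩
  have heq : ∀ ω, mF τ E0 V ω F A = ⨅ k : ℕ, en ω (TopologicalSpace.denseSeq X k) := by
    intro ω
    have hb' : BddBelow (Set.range fun k : ℕ => en ω (TopologicalSpace.denseSeq X k)) :=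
      (hbdd ω).mono (Set.range_comp_subset_range (TopologicalSpace.denseSeq X) (en ω))
    apply le_antisymm
    · exact le_ciInf fun k => ciInf_le (hbdd ω) _
    · refine le_ciInf fun φ => ?_
      have hcl : IsClosed {φ : X | ⨅ k : ℕ, en ω (TopologicalSpace.denseSeq X k) ≤ en ω φ} :=
        isClosed_le continuous_const (hcont ω)
      have hall : closure (Set.range (TopologicalSpace.denseSeq X)) ⊆
          {φ : X | ⨅ k : ℕ, en ω (TopologicalSpace.denseSeq X k) ≤ en ω φ} :=
        closure_minimal (by rintro _ ⟨k, rfl⟩; exact ciInf_le hb' k) hcl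
      exact hall (TopologicalSpace.denseRange_denseSeq X φ)
  simp only [heq]
  exact Measurable.iInf fun k => hmeas _

lemma fdom_integrable {P : Measure Ω} [IsProbabilityMeasure P] {lam : Zd d → Ω → ℝ} {p c₁ α : ℝ}
    (hlammeas : ∀ b ∈ E0, Measurable (lam b)) (hlamnn : ∀ b ∈ E0, ∀ ω : Ω, 0 ≤ lam b ω)
    (hα : 1 ≤ α) (hmomα : ∀ b ∈ E0, ∫⁻ ω, ENNReal.ofReal (lam b ω ^ α) ∂P < ⊤)
    (F : Rd d →L[ℝ] Rn n) : Integrable (fdom E0 lam p c₁ F) P := by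
  have hl : ∀ b ∈ E0, Integrable (lam b) P := by
    intro b hb
    have h1 : Integrable (fun ω => lam b ω ^ α) P := by
      refine ⟨((hlammeas b hb).pow_const α).aestronglyMeasurable, ?_⟩
      rw [hasFiniteIntegral_iff_ofReal (Eventually.of_forall fun ω =>
        Real.rpow_nonneg (hlamnn b hb ω) α)]
      exact hmomα b hb
    refine Integrable.mono' ((integrable_const (1 : ℝ)).add h1)
      (hlammeas b hb).aestronglyMeasurable (Eventually.of_forall fun ω => ?_)
    have h0 := hlamnn b hb ω
    rw [Real.norm_eq_abs, abs_of_nonneg h0, Pi.add_apply]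
    rcases le_total (lam b ω) 1 with h | h
    · have := Real.rpow_nonneg h0 α
      linarith
    · have := Real.self_le_rpow_of_one_le h hα
      linarith
  unfold fdom
  refine integrable_finsetSum _ fun b hb => ?_
  exact ((integrable_const (1 : ℝ)).add ((hl b hb).mul_const _)).const_mul _

lemma fdom_nonneg {lam : Zd d → Ω → ℝ} {p c₁ : ℝ} (hc₁ : 0 < c₁)
    (hlamnn : ∀ b ∈ E0, ∀ ω : Ω, 0 ≤ lam b ω) (F : Rd d →L[ℝ] Rn n) (ω : Ω) :
    0 ≤ fdom E0 lam p c₁ F ω := by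
  refine Finset.sum_nonneg fun b hb => ?_
  have := hlamnn b hb ω
  positivity

end

/-- Union of the half-open unit cubes with corners in `S`. -/
def cell (S : Finset (Zd d)) : Set (Rd d) := {x | (fun i => ⌊x i⌋) ∈ S}

lemma cell_lat (S : Finset (Zd d)) : Lat (cell S) S := by
  intro z
  simp [cell, toRd_apply]

lemma cell_union (S T : Finset (Zd d)) : cell (S ∪ T) = cell S ∪ cell T := by
  ext x
  simp [cell]

lemma cell_disjoint {S T : Finset (Zd d)} (h : Disjoint S T) : Disjoint (cell S) (cell T) := by
  rw [Set.disjoint_left]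
  intro x h1 h2
  exact Finset.disjoint_left.1 h h1 h2

lemma cell_shift (S : Finset (Zd d)) (w : Zd d) (x : Rd d) :
    x + toRd w ∈ cell (shift w S) ↔ x ∈ cell S := by
  simp only [cell, mem_ofPred_eq, mem_shift]
  rw [show ((fun i => ⌊(x + toRd w) i⌋) - w : Zd d) = fun i => ⌊x i⌋ by
    ext i
    simp [toRd_apply]]

lemma cube_eq (k : ℕ) : cube d k = cell (blk k 0) := by
  ext x
  simp only [cube, cell, mem_ofPred_eq, mem_blk]
  refine forall_congr' fun i => ?_
  rw [Pi.zero_apply, Int.le_floor, zero_add, Int.le_sub_one_iff, Int.floor_lt]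
  simp

lemma Lat.sdiff {A A' : Set (Rd d)} {S S' : Finset (Zd d)} (h : Lat A S) (h' : Lat A' S') :
    Lat (A \ A') (S \ S') := by
  intro z
  rw [Set.mem_diff, Finset.mem_sdiff, h z, h' z]

lemma tendsto_div_of_close {g : ℝ → ℝ} {a : ℝ} (h : ∀ t, |g t - t * a| ≤ 2) :
    Tendsto (fun t : ℝ => g t / t) atTop (𝓝 a) := by
  rw [tendsto_iff_norm_sub_tendsto_zero]
  have h0 : Tendsto (fun t : ℝ => 2 / t) atTop (𝓝 0) := tendsto_const_nhds.div_atTop tendsto_id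
  refine squeeze_zero' (Eventually.of_forall fun _ => norm_nonneg _) ?_ h0
  filter_upwards [eventually_gt_atTop (0 : ℝ)] with t ht
  have e : g t / t - a = (g t - t * a) / t := by field_simp
  rw [Real.norm_eq_abs, e, abs_div, abs_of_pos ht]
  gcongr
  exact h t

lemma boxFam_in (a b : Fin d → ℝ) :
    BoxFam a b (fun t i => ⌈t * a i⌉) (fun t i => ⌊t * b i⌋ - 1) := by
  constructor
  · intro i
    refine tendsto_div_of_close (g := fun t => ((⌈t * a i⌉ : ℤ) : ℝ)) fun t => ?_
    have h1 := Int.le_ceil (t * a i)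
    have h2 := Int.ceil_lt_add_one (t * a i)
    rw [abs_le]; constructor <;> linarith
  · intro i
    refine tendsto_div_of_close (g := fun t => ((⌊t * b i⌋ - 1 : ℤ) : ℝ)) fun t => ?_
    have h1 := Int.floor_le (t * b i)
    have h2 := Int.lt_floor_add_one (t * b i)
    push_cast
    rw [abs_le]; constructor <;> linarith

lemma boxFam_out (a b : Fin d → ℝ) :
    BoxFam a b (fun t i => ⌊t * a i⌋) (fun t i => ⌊t * b i⌋) := by
  have key : ∀ c : ℝ, Tendsto (fun t : ℝ => ((⌊t * c⌋ : ℤ) : ℝ) / t) atTop (𝓝 c) := by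
    intro c
    refine tendsto_div_of_close (g := fun t => ((⌊t * c⌋ : ℤ) : ℝ)) fun t => ?_
    have h1 := Int.floor_le (t * c)
    have h2 := Int.lt_floor_add_one (t * c)
    rw [abs_le]; constructor <;> linarith
  exact ⟨fun i => key _, fun i => key _⟩

lemma mem_smul_closedBox {a b : Fin d → ℝ} {t : ℝ} (ht : 0 < t) (x : Rd d) :
    x ∈ t • closedBox a b ↔ ∀ i, t * a i ≤ x i ∧ x i ≤ t * b i := by
  rw [Set.mem_smul_set_iff_inv_smul_mem₀ ht.ne']
  simp only [closedBox, mem_ofPred_eq, PiLp.smul_apply, smul_eq_mul]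
  refine forall_congr' fun i => ?_
  rw [le_inv_mul_iff₀ ht, inv_mul_le_iff₀ ht]

lemma lat_smul_closedBox {a b : Fin d → ℝ} {t : ℝ} (ht : 0 < t) :
    Lat (t • closedBox a b) (Finset.Icc (fun i => ⌈t * a i⌉) (fun i => ⌊t * b i⌋)) := by
  intro z
  rw [mem_smul_closedBox ht, mem_Icc_iff]
  refine forall_congr' fun i => ?_
  rw [toRd_apply, Int.ceil_le, Int.le_floor]

lemma cell_subset {a b : Fin d → ℝ} {t : ℝ} (ht : 0 < t) :
    cell (Finset.Icc (fun i => ⌈t * a i⌉) (fun i => ⌊t * b i⌋ - 1)) ⊆ t • closedBox a b := by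
  intro x hx
  rw [cell, mem_ofPred_eq, mem_Icc_iff] at hx
  rw [mem_smul_closedBox ht]
  intro i
  obtain ⟨h1, h2⟩ := hx i
  have h3 := Int.floor_le (x i)
  have h4 := Int.lt_floor_add_one (x i)
  have h5 := Int.le_ceil (t * a i)
  have h6 := Int.floor_le (t * b i)
  have h7 : ((⌈t * a i⌉ : ℤ) : ℝ) ≤ (⌊x i⌋ : ℤ) := by exact_mod_cast h1
  have h8 : ((⌊x i⌋ : ℤ) : ℝ) ≤ (⌊t * b i⌋ : ℤ) - 1 := by exact_mod_cast h2
  constructor <;> linarith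

lemma subset_cell {a b : Fin d → ℝ} {t : ℝ} (ht : 0 < t) :
    t • closedBox a b ⊆ cell (Finset.Icc (fun i => ⌊t * a i⌋) (fun i => ⌊t * b i⌋)) := by
  intro x hx
  rw [mem_smul_closedBox ht] at hx
  rw [cell, mem_ofPred_eq, mem_Icc_iff]
  exact fun i => ⟨Int.floor_mono (hx i).1, Int.floor_mono (hx i).2⟩

lemma volume_closedBox {a b : Fin d → ℝ} (hab : ∀ i, a i < b i) :
    (volume (closedBox a b)).toReal = ∏ i, (b i - a i) := by
  have h1 : closedBox a b = (WithLp.ofLp : Rd d → Fin d → ℝ) ⁻¹' (Set.Icc a b) := by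
    ext x
    simp only [closedBox, mem_ofPred_eq, Set.mem_preimage, Set.mem_Icc, Pi.le_def]
    rw [← forall_and]
  rw [h1, (PiLp.volume_preserving_ofLp (Fin d)).measure_preimage
      measurableSet_Icc.nullMeasurableSet,
    Real.volume_Icc_pi_toReal fun i => (hab i).le]

section
variable {τ : Zd d → Ω → Ω} {E0 : Finset (Zd d)} {V : Zd d → Ω → Rn n → ℝ}

lemma mF_box_tendsto (hd : 0 < d) (hV : ∀ b ∈ E0, ∀ (ω : Ω) (r : Rn n), 0 ≤ V b ω r)
    {lam : Zd d → Ω → ℝ} {p c₁ : ℝ} (hc₁ : 0 < c₁) (hlamnn : ∀ b ∈ E0, ∀ ω : Ω, 0 ≤ lam b ω)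
    (hg : ∀ b ∈ E0, ∀ (ω : Ω) (r : Rn n), V b ω r ≤ c₁ * (1 + lam b ω * (‖r‖ ^ p + 1)))
    (F : Rd d →L[ℝ] Rn n) {ω : Ω} {I W : ℝ}
    (h1 : ConvAt (fun z => fdom E0 lam p c₁ F (τ z ω)) I) {a b : Fin d → ℝ}
    (hab : ∀ i, a i < b i)
    (h2 : ∀ A B : ℝ → Zd d, BoxFam a b A B →
      Tendsto (fun t => mF τ E0 V ω F (cell (Finset.Icc (A t) (B t))) / t ^ d) atTop
        (𝓝 ((∏ i, (b i - a i)) * W))) :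
    Tendsto (fun t => mF τ E0 V ω F (t • closedBox a b) / t ^ d) atTop
        (𝓝 ((∏ i, (b i - a i)) * W)) := by
  have hin := h2 _ _ (boxFam_in a b)
  have hout := h2 _ _ (boxFam_out a b)
  have hdf := h1.sdiff hab (boxFam_out a b) (boxFam_in a b)
  have hU := hin.add hdf
  have hL := hout.sub hdf
  rw [add_zero] at hU
  rw [sub_zero] at hL
  have hf0 := fdom_nonneg (E0 := E0) (lam := lam) (p := p) hc₁ hlamnn F
  refine tendsto_of_tendsto_of_tendsto_of_le_of_le' hL hU ?_ ?_
  · filter_upwards [eventually_gt_atTop (0 : ℝ)] with t ht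
    have htd : 0 < t ^ d := pow_pos ht d
    rw [← sub_div]
    refine div_le_div_of_nonneg_right ?_ htd.le
    rw [sub_le_iff_le_add]
    set S' := Finset.Icc (fun i => ⌊t * a i⌋) (fun i => ⌊t * b i⌋) with hS'
    have hlat := lat_smul_closedBox (a := a) (b := b) ht
    have hlat' := (cell_lat S').sdiff hlat
    have e := mF_union (τ := τ) (V := V) hd hV hlat hlat' disjoint_sdiff_right ω F
    rw [Set.union_sdiff_cancel (subset_cell ht)] at e
    refine e.trans (add_le_add le_rfl ?_)
    refine (mF_le_fdom hV hg hlat' ω F).trans ?_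
    refine Finset.sum_le_sum_of_subset_of_nonneg (Finset.sdiff_subset_sdiff le_rfl ?_)
      fun z _ _ => hf0 _
    intro z hz
    exact (hlat z).1 (cell_subset ht ((cell_lat _ z).2 hz))
  · filter_upwards [eventually_gt_atTop (0 : ℝ)] with t ht
    have htd : 0 < t ^ d := pow_pos ht d
    rw [← add_div]
    refine div_le_div_of_nonneg_right ?_ htd.le
    set S := Finset.Icc (fun i => ⌈t * a i⌉) (fun i => ⌊t * b i⌋ - 1) with hS
    have hlat := lat_smul_closedBox (a := a) (b := b) ht
    have hlat' := hlat.sdiff (cell_lat S)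
    have e := mF_union (τ := τ) (V := V) hd hV (cell_lat S) hlat' disjoint_sdiff_right ω F
    rw [Set.union_sdiff_cancel (cell_subset ht)] at e
    refine e.trans (add_le_add le_rfl ?_)
    refine (mF_le_fdom hV hg hlat' ω F).trans ?_
    refine Finset.sum_le_sum_of_subset_of_nonneg (Finset.sdiff_subset_sdiff ?_ le_rfl)
      fun z _ _ => hf0 _
    intro z hz
    exact (cell_lat _ z).1 (subset_cell ht ((hlat z).2 hz))

end


/-- rescaled representation of the homogenized energy density,
Corollary 3.4 of the paper. -/
theorem rescaled_mF
    {d n : ℕ} (hd : 2 ≤ d) (hn : 1 ≤ n)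
    {Ω : Type*} [MeasurableSpace Ω] (P : Measure Ω) [IsProbabilityMeasure P]
    (τ : Zd d → Ω → Ω) (hτ0 : τ 0 = id)
    (hτadd : ∀ x y : Zd d, τ (x + y) = τ x ∘ τ y)
    (hτmp : ∀ z : Zd d, MeasurePreserving (τ z) P P)
    (hτerg : ∀ B : Set Ω, MeasurableSet B → (∀ z : Zd d, τ z ⁻¹' B = B) → P B = 0 ∨ P B = 1)
    (E0 : Finset (Zd d)) (hE00 : (0 : Zd d) ∉ E0) (hE0b : ∀ i : Fin d, stdb i ∈ E0)
    (p c₁ : ℝ) (hp : 1 < p) (hc₁ : 0 < c₁)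
    (V : Zd d → Ω → Rn n → ℝ)
    (hVmeas : ∀ b ∈ E0, Measurable fun q : Ω × Rn n => V b q.1 q.2)
    (hVcont : ∀ b ∈ E0, ∀ ω : Ω, Continuous (V b ω))
    (hVnn : ∀ b ∈ E0, ∀ (ω : Ω) (r : Rn n), 0 ≤ V b ω r)
    (lam : Zd d → Ω → ℝ)
    (hlammeas : ∀ b ∈ E0, Measurable (lam b))
    (hlamnn : ∀ b ∈ E0, ∀ ω : Ω, 0 ≤ lam b ω)
    (hgrowth : ∀ b ∈ E0, ∀ (ω : Ω) (r : Rn n),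
      lam b ω * (‖r‖ ^ p / c₁ - c₁) ≤ V b ω r ∧ V b ω r ≤ c₁ * (1 + lam b ω * (‖r‖ ^ p + 1)))
    (α β : ℝ) (hα : 1 ≤ α) (hβ : 1 / (p - 1) ≤ β)
    (hmomα : ∀ b ∈ E0, ∫⁻ ω, ENNReal.ofReal (lam b ω ^ α) ∂P < ⊤)
    (hmomβ : ∀ i : Fin d, ∫⁻ ω, ENNReal.ofReal (lam (stdb i) ω) ^ (-β) ∂P < ⊤)
    (F : Rd d →L[ℝ] Rn n) :
    ∃ ΩF : Set Ω, MeasurableSet ΩF ∧ P ΩF = 1 ∧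
      ∀ ω ∈ ΩF, ∀ a b : Fin d → ℝ, (∀ i, a i < b i) →
        Tendsto (fun ε : ℝ => ε ^ d * mF τ E0 V ω F (ε⁻¹ • closedBox a b))
          (𝓝[>] (0 : ℝ)) (𝓝 ((volume (closedBox a b)).toReal * W0 P τ E0 V F)) := by
  have hτ : IsAct P τ := ⟨hτ0, hτadd, hτmp⟩
  have hd0 : 0 < d := by omega
  have hg : ∀ b ∈ E0, ∀ (ω : Ω) (r : Rn n), V b ω r ≤ c₁ * (1 + lam b ω * (‖r‖ ^ p + 1)) :=
    fun b hb ω r => (hgrowth b hb ω r).2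
  have hM : SubProc P τ (fun ω S => mF τ E0 V ω F (cell S)) (fdom E0 lam p c₁ F) :=
    { sub := fun ω =>
        { nonneg := fun S => mF_nonneg hVnn _ _ _
          empty := by
            refine le_antisymm ?_ (mF_nonneg hVnn _ _ _)
            simpa using mF_le_fdom (τ := τ) hVnn hg (cell_lat ∅) ω F
          subadd := fun S T hST => by
            rw [cell_union]
            exact mF_union hd0 hVnn (cell_lat S) (cell_lat T) (cell_disjoint hST) ω F }
      stat := fun w ω S => mF_stat hτadd (cell_shift S w) hVnn ω F
      meas := fun S => mF_meas (fun z => (hτmp z).measurable) hVmeas hVcont hVnn (cell_lat S) F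
      fint := fdom_integrable hlammeas hlamnn hα hmomα F
      f0 := fdom_nonneg hc₁ hlamnn F
      le := fun ω S => mF_le_fdom hVnn hg (cell_lat S) ω F }
  have hbdd : BddBelow (Set.range fun k : {k : ℕ // 0 < k} =>
      (((k : ℕ) : ℝ) ^ d)⁻¹ * ∫ ω, mF τ E0 V ω F (cube d k) ∂P) := by
    refine ⟨0, ?_⟩
    rintro _ ⟨k, rfl⟩
    exact mul_nonneg (by positivity) (integral_nonneg fun ω => mF_nonneg hVnn _ _ _)
  have hsub := subadd_ergodic hM hτ hτerg (W := W0 P τ E0 V F)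
    (fun k hk => by
      have h1 := ciInf_le hbdd ⟨k, hk⟩
      simp only [cube_eq] at h1
      unfold W0
      simpa only [cube_eq] using h1)
    (fun ε hε => by
      haveI : Nonempty {k : ℕ // 0 < k} := ⟨⟨1, one_pos⟩⟩
      obtain ⟨k, hk⟩ := exists_lt_of_ciInf_lt
        (show W0 P τ E0 V F < W0 P τ E0 V F + ε by linarith)
      rw [cube_eq] at hk
      exact ⟨k, k.2, hk⟩)
  have hbir : ∀ᵐ ω ∂P, ConvAt (fun z => fdom E0 lam p c₁ F (τ z ω))
      (∫ ω, fdom E0 lam p c₁ F ω ∂P) := birkhoff hτ hτerg hM.fint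
  have hae := hsub.and hbir
  obtain ⟨N, hN, hNm, hN0⟩ := exists_measurable_superset_of_null (ae_iff.1 hae)
  refine ⟨Nᶜ, hNm.compl, ?_, ?_⟩
  · rw [prob_compl_eq_one_iff hNm]
    exact hN0
  · intro ω hω a b hab
    obtain ⟨h2, h1⟩ := not_not.1 fun h => hω (hN h)
    have h3 := mF_box_tendsto hd0 hVnn hc₁ hlamnn hg F h1 hab (h2 a b hab)
    rw [volume_closedBox hab]
    refine (h3.comp tendsto_inv_nhdsGT_zero).congr fun ε => ?_
    simp only [Function.comp_apply, inv_pow, div_inv_eq_mul]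
    rw [mul_comm]

end StochHom
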